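/- arXiv:2209.02027 — 2 statements merged into one kernel-verified Lean document; each statement's English description precedes it below -/
import Mathlib

section
/- For every integer N ≥ 1 and every θ = (θ₁,θ₂) ∈ ℝⁿ×ℝⁿ, the space H_{N,θ} of quasi-periodic distributions is a complex subspace of 𝒮'(ℝⁿ) of dimension N^n, and the family of Dirac combs {e^θ_j : j ∈ {0,1,…,N−1}ⁿ} is a basis of H_{N,θ}. -/
open BigOperators

/-- The standard symplectic form `σ((q,p),(q',p')) = ⟨p,q'⟩ − ⟨p',q⟩` on
`ℝ^{2n} = ℝⁿ × ℝⁿ`, a point `x` being written as a pair `x = (q,p)`. -/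
def sigmaR (n : ℕ) (x y : (Fin n → ℝ) × (Fin n → ℝ)) : ℝ :=
  (∑ i : Fin n, x.2 i * y.1 i) - ∑ i : Fin n, y.2 i * x.1 i

/-- `Q((q,p)) = ⟨q,p⟩`. -/
def QR (n : ℕ) (x : (Fin n → ℝ) × (Fin n → ℝ)) : ℝ :=
  ∑ i : Fin n, x.1 i * x.2 i

/-- The Schrödinger representation operator:
`(ρ_N(x,ζ)f)(y) = ζ^N e^{2πiN(⟨p,y⟩ − ⟨q,p⟩/2)} f(y−q)` for `x = (q,p)`. -/
noncomputable def rho (n N : ℕ) (x : (Fin n → ℝ) × (Fin n → ℝ)) (ζ : ℂ)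
    (f : (Fin n → ℝ) → ℂ) : (Fin n → ℝ) → ℂ :=
  fun y => ζ ^ N * Complex.exp (2 * Real.pi * Complex.I * (N : ℂ) *
      (((∑ i : Fin n, x.2 i * y i : ℝ) : ℂ) - ((QR n x : ℝ) : ℂ) / 2)) * f (y - x.1)

/-- Coercion of an integer lattice point `w ∈ ℤ^{2n}` into `ℝ^{2n}`. -/
def castVec (n : ℕ) (w : (Fin n → ℤ) × (Fin n → ℤ)) : (Fin n → ℝ) × (Fin n → ℝ) :=
  (fun i => (w.1 i : ℝ), fun i => (w.2 i : ℝ))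

/-- The pairing of the Dirac comb `e^θ_j` against a test function:
`e^θ_j(f) = N^{−n/2} Σ_{k∈ℤⁿ} e^{−2πi⟨θ₂,k⟩} f(k + (j−θ₁)/N)`. -/
noncomputable def comb (n N : ℕ) (θ : (Fin n → ℝ) × (Fin n → ℝ)) (j : Fin n → ℤ)
    (f : (Fin n → ℝ) → ℂ) : ℂ :=
  (((N : ℝ) ^ (-(n : ℝ) / 2) : ℝ) : ℂ) *
    ∑' k : Fin n → ℤ,
      Complex.exp (-(2 * Real.pi * Complex.I) *
          ((∑ i : Fin n, θ.2 i * (k i : ℝ) : ℝ) : ℂ)) *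
        f (fun i => (k i : ℝ) + ((j i : ℝ) - θ.1 i) / N)

/-- The transformed test function defining the dual action of `ρ_N(x,ζ)` on tempered
distributions by `(ρ_N(x,ζ)ν)(f) := ν(f̃)`, namely
`f̃(z) = ζ^N e^{2πiN(⟨p,z⟩ + ⟨q,p⟩/2)} f(z+q)` for `x = (q,p)`. -/
noncomputable def rhoDualTest (n N : ℕ) (x : (Fin n → ℝ) × (Fin n → ℝ)) (ζ : ℂ)
    (f : (Fin n → ℝ) → ℂ) : (Fin n → ℝ) → ℂ :=
  fun z => ζ ^ N * Complex.exp (2 * Real.pi * Complex.I * (N : ℂ) *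
      (((∑ i : Fin n, x.2 i * z i : ℝ) : ℂ) + ((QR n x : ℝ) : ℂ) / 2)) * f (z + x.1)

open SchwartzMap Filter Topology in
lemma hasSum_schwartz_zero {E ι : Type*} [NormedAddCommGroup E] [NormedSpace ℝ E]
    (g : ι → SchwartzMap E ℂ)
    (hs : ∀ l m, Summable fun i => SchwartzMap.seminorm ℂ l m (g i))
    (h0 : ∀ x, ∑' i, g i x = 0) : HasSum g 0 := by
  have key : ∀ m x, HasSum (fun i => iteratedFDeriv ℝ m (g i) x) 0 := by
    intro m x
    have h1 := iteratedFDeriv_tsum_apply (𝕜 := ℝ) (N := ⊤) (f := fun i => (g i : E → ℂ))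
      (v := fun k i => SchwartzMap.seminorm ℂ 0 k (g i)) (fun i => (g i).smooth ⊤)
      (fun k _ => hs 0 k)
      (fun k i x _ => SchwartzMap.norm_iteratedFDeriv_le_seminorm ℂ (g i) k x)
      (k := m) le_top x
    have h2 : Summable (fun i => iteratedFDeriv ℝ m (g i) x) :=
      Summable.of_norm_bounded (hs 0 m)
        (fun i => SchwartzMap.norm_iteratedFDeriv_le_seminorm ℂ (g i) m x)
    have h3 : (fun y => ∑' i, g i y) = fun _ => (0 : ℂ) := funext h0
    rw [h3] at h1
    have h4 : iteratedFDeriv ℝ m (fun _ : E => (0 : ℂ)) x = 0 := by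
      simp
    rw [h4] at h1
    rw [h1]
    exact h2.hasSum
  unfold HasSum
  rw [SummationFilter.unconditional_filter, (schwartz_withSeminorms ℂ E ℂ).tendsto_nhds]
  rintro ⟨l, m⟩ ε hε
  have hT := (hs l m).hasSum
  unfold HasSum at hT
  rw [SummationFilter.unconditional_filter] at hT
  have hT2 := hT.eventually (lt_mem_nhds
    (show (∑' i, SchwartzMap.seminorm ℂ l m (g i)) - ε
      < ∑' i, SchwartzMap.seminorm ℂ l m (g i) by linarith))
  filter_upwards [hT2] with s hsm
  rw [sub_zero]
  refine lt_of_le_of_lt (b := (∑' i, SchwartzMap.seminorm ℂ l m (g i))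
    - ∑ i ∈ s, SchwartzMap.seminorm ℂ l m (g i)) ?_ (by linarith)
  have hsplit := (hs l m).sum_add_tsum_compl (s := s)
  have hsub := (hs l m).subtype ((s : Set ι)ᶜ)
  rw [← hsplit, add_sub_cancel_left]
  refine SchwartzMap.seminorm_le_bound ℂ l m _ (tsum_nonneg fun i => apply_nonneg _ _) ?_
  intro x
  have hk := key m x
  have hk2 := hk.summable.sum_add_tsum_compl (s := s)
  rw [hk.tsum_eq] at hk2
  have e1 : iteratedFDeriv ℝ m (⇑(∑ i ∈ s, g i)) x = ∑ i ∈ s, iteratedFDeriv ℝ m (g i) x := by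
    have : (⇑(∑ i ∈ s, g i) : E → ℂ) = fun x => ∑ i ∈ s, g i x := by
      ext y; simp [_root_.sum_apply]
    rw [this]
    rw [iteratedFDeriv_fun_sum_apply]
    intro i _
    exact ((g i).smooth m).contDiffAt
  rw [e1, eq_neg_of_add_eq_zero_left hk2, norm_neg]
  have hb : ∀ i, ‖x‖ ^ l * ‖iteratedFDeriv ℝ m (g i) x‖ ≤ SchwartzMap.seminorm ℂ l m (g i) :=
    fun i => SchwartzMap.le_seminorm ℂ l m (g i) x
  have hn : Summable fun i => ‖iteratedFDeriv ℝ m (g i) x‖ :=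
    Summable.of_nonneg_of_le (fun _ => norm_nonneg _)
      (fun i => SchwartzMap.norm_iteratedFDeriv_le_seminorm ℂ (g i) m x) (hs 0 m)
  have hn' := hn.subtype ((s : Set ι)ᶜ)
  calc _ ≤ ‖x‖ ^ l * ∑' i : ((s : Set ι)ᶜ : Set ι), ‖iteratedFDeriv ℝ m (g i) x‖ := by
        gcongr
        exact norm_tsum_le_tsum_norm hn'
    _ = ∑' i : ((s : Set ι)ᶜ : Set ι), ‖x‖ ^ l * ‖iteratedFDeriv ℝ m (g i) x‖ := by
        rw [tsum_mul_left]
    _ ≤ _ := Summable.tsum_le_tsum (fun i => hb i) (hn'.mul_left _) hsub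

lemma summable_pi_prod (u : ℤ → ℝ) (hu : Summable u) (h0 : ∀ k, 0 ≤ u k) (n : ℕ) :
    Summable fun k : Fin n → ℤ => ∏ i, u (k i) := by
  induction n with
  | zero => exact Summable.of_finite
  | succ n ih =>
    rw [← (Fin.consEquiv (fun _ : Fin (n+1) => ℤ)).summable_iff]
    have := hu.mul_of_nonneg ih h0 (fun k => Finset.prod_nonneg fun i _ => h0 _)
    refine this.congr fun p => ?_
    simp [Fin.prod_univ_succ, Fin.consEquiv]

lemma summable_lattice (n : ℕ) :
    Summable fun k : Fin n → ℤ => ((1 + ‖(fun i => (k i : ℝ))‖) ^ (2 * n))⁻¹ := by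
  have hu : Summable fun k : ℤ => ((1 + |(k : ℝ)|) ^ 2)⁻¹ := by
    have h1 : Summable fun k : ℤ => 1 / (k : ℝ) ^ 2 := Real.summable_one_div_int_pow.mpr (by norm_num)
    refine Summable.of_norm_bounded_eventually h1 ?_
    have : ∀ᶠ k : ℤ in Filter.cofinite, k ≠ 0 := Filter.eventually_cofinite_ne 0
    filter_upwards [this] with k hk
    rw [Real.norm_of_nonneg (by positivity), one_div]
    have : (0 : ℝ) < |(k : ℝ)| := by positivity
    rw [← sq_abs (k : ℝ)]
    gcongr
    linarith
  refine Summable.of_nonneg_of_le (fun _ => by positivity) (fun k => ?_)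
    (summable_pi_prod _ hu (fun _ => by positivity) n)
  rw [Finset.prod_inv_distrib]
  gcongr
  rw [pow_mul]
  calc _ ≤ ∏ i : Fin n, ((1 + ‖(fun i => (k i : ℝ))‖) ^ 2) := by
          refine Finset.prod_le_prod (fun _ _ => by positivity) fun i _ => ?_
          gcongr
          exact norm_le_pi_norm (fun i => (k i : ℝ)) i
      _ = _ := by simp

/-- cast of a lattice vector -/
def cst {n : ℕ} (k : Fin n → ℤ) : Fin n → ℝ := fun i => (k i : ℝ)

/-- plane wave -/
noncomputable def ee {n : ℕ} (ξ z : Fin n → ℝ) : ℂ :=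
  Complex.exp (2 * Real.pi * Complex.I * ((∑ i, ξ i * z i : ℝ) : ℂ))

lemma ee_add_left {n : ℕ} (ξ η z : Fin n → ℝ) : ee (ξ + η) z = ee ξ z * ee η z := by
  simp only [ee, ← Complex.exp_add, Pi.add_apply, add_mul, Finset.sum_add_distrib]
  congr 1; push_cast; ring

lemma ee_add_right {n : ℕ} (ξ z w : Fin n → ℝ) : ee ξ (z + w) = ee ξ z * ee ξ w := by
  simp only [ee, ← Complex.exp_add, Pi.add_apply, mul_add, Finset.sum_add_distrib]
  congr 1; push_cast; ring

lemma ee_comm {n : ℕ} (ξ z : Fin n → ℝ) : ee ξ z = ee z ξ := by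
  simp only [ee, mul_comm]

lemma ee_zero {n : ℕ} (z : Fin n → ℝ) : ee 0 z = 1 := by
  simp [ee]

lemma ee_neg_mul {n : ℕ} (ξ z : Fin n → ℝ) : ee (-ξ) z * ee ξ z = 1 := by
  rw [← ee_add_left]; simp [ee_zero]

lemma ee_int {n : ℕ} (b k : Fin n → ℤ) : ee (cst b) (cst k) = 1 := by
  simp only [ee, cst]
  rw [Complex.exp_eq_one_iff]
  exact ⟨∑ i, b i * k i, by push_cast; ring⟩

lemma norm_ee {n : ℕ} (ξ z : Fin n → ℝ) : ‖ee ξ z‖ = 1 := by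
  rw [ee, show (2 * Real.pi * Complex.I * ((∑ i, ξ i * z i : ℝ) : ℂ)) =
    ((2 * Real.pi * (∑ i, ξ i * z i) : ℝ) : ℂ) * Complex.I by push_cast; ring]
  exact Complex.norm_exp_ofReal_mul_I _

lemma ee_cont {n : ℕ} (ξ : Fin n → ℝ) : Continuous (ee ξ) := by
  unfold ee; fun_prop

lemma mFourier_eq_ee {n : ℕ} (b : Fin n → ℤ) (x : Fin n → ℝ) :
    UnitAddTorus.mFourier b (fun i => (x i : UnitAddCircle)) = ee (cst b) x := by
  simp only [UnitAddTorus.mFourier, ContinuousMap.coe_mk, fourier_coe_apply, ee, cst,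
    ← Complex.exp_sum]
  congr 1
  push_cast
  rw [Finset.mul_sum]
  refine Finset.sum_congr rfl fun i _ => ?_
  simp; ring

open FourierTransform in
/-- Fourier transform, transported to Euclidean space -/
noncomputable def fhat {n : ℕ} (f : SchwartzMap (Fin n → ℝ) ℂ) :
    SchwartzMap (EuclideanSpace ℝ (Fin n)) ℂ :=
  𝓕 (SchwartzMap.compCLMOfContinuousLinearEquiv ℂ (EuclideanSpace.equiv (Fin n) ℝ) f)

lemma fhat_apply {n : ℕ} (f : SchwartzMap (Fin n → ℝ) ℂ) (ξ : Fin n → ℝ) :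
    fhat f (WithLp.toLp 2 ξ) = ∫ v, ee (-ξ) v * f v := by
  rw [fhat, SchwartzMap.fourier_coe, Real.fourier_eq',
    ← (PiLp.volume_preserving_toLp (Fin n)).integral_comp
      (MeasurableEquiv.toLp 2 (Fin n → ℝ)).measurableEmbedding]
  congr 1
  ext v
  simp only [smul_eq_mul, SchwartzMap.compCLMOfContinuousLinearEquiv_apply, Function.comp]
  congr 1
  simp only [ee]
  congr 1
  simp [PiLp.inner_apply]
  ring

open FourierTransform in
lemma exists_fhat_eq {n : ℕ} (g : SchwartzMap (EuclideanSpace ℝ (Fin n)) ℂ) :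
    ∃ f : SchwartzMap (Fin n → ℝ) ℂ, fhat f = g := by
  refine ⟨SchwartzMap.compCLMOfContinuousLinearEquiv ℂ (EuclideanSpace.equiv (Fin n) ℝ).symm
    (𝓕⁻ g), ?_⟩
  have : SchwartzMap.compCLMOfContinuousLinearEquiv ℂ (EuclideanSpace.equiv (Fin n) ℝ)
      (SchwartzMap.compCLMOfContinuousLinearEquiv ℂ (EuclideanSpace.equiv (Fin n) ℝ).symm
    (𝓕⁻ g)) = 𝓕⁻ g := by
    ext x
    simp
  rw [fhat, this]
  simp

lemma schwartz_decay {E : Type*} [NormedAddCommGroup E] [NormedSpace ℝ E]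
    (f : SchwartzMap E ℂ) (M m : ℕ) :
    ∃ C : ℝ, 0 ≤ C ∧ ∀ i ≤ m, ∀ x, (1 + ‖x‖) ^ M * ‖iteratedFDeriv ℝ i f x‖ ≤ C := by
  refine ⟨_, ?_, fun i hi x => SchwartzMap.one_add_le_sup_seminorm_apply (𝕜 := ℂ) (m := (M, m))
    le_rfl hi f x⟩
  exact mul_nonneg (by positivity) (apply_nonneg _ _)

lemma schwartz_decay0 {E : Type*} [NormedAddCommGroup E] [NormedSpace ℝ E]
    (f : SchwartzMap E ℂ) (M : ℕ) :
    ∃ C : ℝ, 0 ≤ C ∧ ∀ x, (1 + ‖x‖) ^ M * ‖f x‖ ≤ C := by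
  obtain ⟨C, hC, h⟩ := schwartz_decay f M 0
  exact ⟨C, hC, fun x => by simpa using h 0 le_rfl x⟩

lemma peetre {E : Type*} [NormedAddCommGroup E] (x k : E) :
    1 + ‖k‖ ≤ (1 + ‖x‖) * (1 + ‖x + k‖) := by
  have : ‖k‖ ≤ ‖x + k‖ + ‖x‖ := by
    calc ‖k‖ = ‖(x + k) - x‖ := by simp
      _ ≤ _ := norm_sub_le _ _
  nlinarith [norm_nonneg x, norm_nonneg (x + k)]

lemma fhat_decay {n : ℕ} (f : SchwartzMap (Fin n → ℝ) ℂ) (M : ℕ) :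
    ∃ C : ℝ, 0 ≤ C ∧ ∀ ξ : Fin n → ℝ, (1 + ‖ξ‖) ^ M * ‖fhat f (WithLp.toLp 2 ξ)‖ ≤ C := by
  obtain ⟨C, hC, h⟩ := schwartz_decay0 (fhat f) M
  refine ⟨C, hC, fun ξ => le_trans ?_ (h (WithLp.toLp 2 ξ))⟩
  gcongr
  rw [pi_norm_le_iff_of_nonneg (norm_nonneg _)]
  intro i
  exact PiLp.norm_apply_le (WithLp.toLp 2 ξ) i

lemma summable_of_decay {n : ℕ} (a : (Fin n → ℤ) → ℝ) (ha : ∀ k, 0 ≤ a k) (C : ℝ)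
    (h : ∀ k, (1 + ‖cst k‖) ^ (2 * n) * a k ≤ C) : Summable a := by
  refine Summable.of_nonneg_of_le ha (fun k => ?_) ((summable_lattice n).mul_left C)
  rw [← div_eq_mul_inv, le_div_iff₀ (by positivity), mul_comm]
  exact h k

lemma translate_bound {n : ℕ} (f : SchwartzMap (Fin n → ℝ) ℂ) :
    ∃ C : ℝ, 0 ≤ C ∧ ∀ x k, ‖f (x + k)‖ ≤ (1 + ‖x‖) ^ (2 * n) * C * ((1 + ‖k‖) ^ (2 * n))⁻¹ := by
  obtain ⟨C, hC, h⟩ := schwartz_decay0 f (2 * n)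
  refine ⟨C, hC, fun x k => ?_⟩
  rw [← div_eq_mul_inv, le_div_iff₀ (by positivity)]
  calc _ ≤ ‖f (x + k)‖ * ((1 + ‖x‖) * (1 + ‖x + k‖)) ^ (2 * n) := by gcongr; exact peetre x k
    _ = (1 + ‖x‖) ^ (2 * n) * ((1 + ‖x + k‖) ^ (2 * n) * ‖f (x + k)‖) := by rw [mul_pow]; ring
    _ ≤ _ := by gcongr; exact h _

lemma summable_translates {n : ℕ} (f : SchwartzMap (Fin n → ℝ) ℂ) (x : Fin n → ℝ) :
    Summable fun k => f (x + cst k) := by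
  obtain ⟨C, hC, h⟩ := translate_bound f
  exact Summable.of_norm_bounded ((summable_lattice n).mul_left _) fun k => h x (cst k)

/-- periodization -/
noncomputable def Zp {n : ℕ} (f : SchwartzMap (Fin n → ℝ) ℂ) (x : Fin n → ℝ) : ℂ :=
  ∑' k, f (x + cst k)

lemma Zp_cont {n : ℕ} (f : SchwartzMap (Fin n → ℝ) ℂ) : Continuous (Zp f) := by
  obtain ⟨C, hC, h⟩ := translate_bound f
  rw [continuous_iff_continuousAt]
  intro x
  have : ContinuousOn (Zp f) (Metric.ball x 1) := by
    refine continuousOn_tsum (u := fun k => (1 + (‖x‖ + 1)) ^ (2 * n) * C * ((1 + ‖cst k‖) ^ (2 * n))⁻¹)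
      (fun k => ?_) ((summable_lattice n).mul_left _) fun k y hy => ?_
    · exact (f.continuous.comp (continuous_id.add continuous_const)).continuousOn
    · refine (h y (cst k)).trans ?_
      gcongr
      have := norm_sub_norm_le y x
      rw [Metric.mem_ball, dist_eq_norm] at hy
      linarith
  exact this.continuousAt (Metric.ball_mem_nhds x one_pos)

lemma Zp_periodic {n : ℕ} (f : SchwartzMap (Fin n → ℝ) ℂ) (x : Fin n → ℝ) (m : Fin n → ℤ) :
    Zp f (x + cst m) = Zp f x := by
  unfold Zp
  rw [← (Equiv.addLeft m).tsum_eq (fun k => f (x + cst k))]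
  congr 1; ext k; congr 1; ext i; simp [cst, add_assoc]

lemma exists_torus {n : ℕ} (f : SchwartzMap (Fin n → ℝ) ℂ) :
    ∃ F : C(UnitAddTorus (Fin n), ℂ), ∀ x : Fin n → ℝ, F (fun i => (x i : UnitAddCircle)) = Zp f x := by
  have hq : IsOpenQuotientMap (Pi.map (fun (_ : Fin n) (x : ℝ) => (x : UnitAddCircle))) :=
    IsOpenQuotientMap.piMap fun i => QuotientAddGroup.isOpenQuotientMap_mk
  let r : UnitAddTorus (Fin n) → (Fin n → ℝ) := Function.surjInv hq.surjective
  have hr : ∀ x : Fin n → ℝ, Zp f (r (fun i => (x i : UnitAddCircle))) = Zp f x := by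
    intro x
    have h1 : Pi.map (fun (_ : Fin n) (x : ℝ) => (x : UnitAddCircle))
        (r (fun i => (x i : UnitAddCircle))) = fun i => (x i : UnitAddCircle) :=
      Function.surjInv_eq hq.surjective _
    have h2 : ∀ i, ∃ m : ℤ, r (fun i => (x i : UnitAddCircle)) i = x i + m := by
      intro i
      have := congrFun h1 i
      simp only [Pi.map_apply] at this
      have h3 := (QuotientAddGroup.eq (s := AddSubgroup.zmultiples (1 : ℝ))).mp this
      obtain ⟨m, hm⟩ := AddSubgroup.mem_zmultiples_iff.mp h3
      refine ⟨-m, ?_⟩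
      simp at hm
      push_cast
      linarith
    choose m hm using h2
    have : r (fun i => (x i : UnitAddCircle)) = x + cst m := by
      ext i; simp [hm, cst]
    rw [this, Zp_periodic]
  refine ⟨⟨fun t => Zp f (r t), ?_⟩, hr⟩
  rw [← hq.continuous_comp_iff]
  have : (fun t => Zp f (r t)) ∘ (Pi.map (fun (_ : Fin n) (x : ℝ) => (x : UnitAddCircle))) = Zp f := by
    ext x; exact hr x
  rw [this]
  exact Zp_cont f

open MeasureTheory in
lemma unfold_integral {n : ℕ} (g : (Fin n → ℝ) → ℂ) (hg : Integrable g) :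
    ∫ x in {x : Fin n → ℝ | ∀ i, x i ∈ Set.Ioc ((0 : Fin n → ℝ) i) ((0 : Fin n → ℝ) i + 1)},
      ∑' k : Fin n → ℤ, g (x + cst k) = ∫ x, g x := by
  set B : Set (Fin n → ℝ) :=
    {x | ∀ i, x i ∈ Set.Ioc ((0 : Fin n → ℝ) i) ((0 : Fin n → ℝ) i + 1)} with hB
  have hBm : MeasurableSet B := MeasurableSet.univ_pi' (fun i => measurableSet_Ioc)
  let s : (Fin n → ℤ) → Set (Fin n → ℝ) := fun k => (fun x => x - cst k) ⁻¹' B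
  have hs : ∀ k, MeasurableSet (s k) := fun k => (measurable_sub_const (cst k)) hBm
  have hmem : ∀ k x, x ∈ s k ↔ ∀ i, ⌈x i⌉ - 1 = k i := by
    intro k x
    simp only [s, B, cst, Set.mem_preimage, Set.mem_ofPred_eq, Pi.sub_apply, Set.mem_Ioc, Pi.zero_apply]
    refine forall_congr' fun i => ?_
    rw [sub_eq_iff_eq_add, Int.ceil_eq_iff]
    push_cast
    constructor <;> rintro ⟨h1, h2⟩ <;> constructor <;> linarith
  have hd : Pairwise (Function.onFun Disjoint s) := by
    intro k l hkl
    refine Set.disjoint_left.mpr fun x hx hy => hkl ?_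
    ext i
    rw [← (hmem k x).mp hx i, ← (hmem l x).mp hy i]
  have hU : ⋃ k, s k = Set.univ := by
    refine Set.eq_univ_of_forall fun x => Set.mem_iUnion.mpr ⟨fun i => ⌈x i⌉ - 1, ?_⟩
    rw [hmem]; intro i; rfl
  have htr : ∀ {G : Type} [NormedAddCommGroup G] [NormedSpace ℝ G] (u : (Fin n → ℝ) → G) (k : Fin n → ℤ),
      ∫ x in s k, u x = ∫ x in B, u (x + cst k) := by
    intro G _ _ u k
    have := (measurePreserving_add_right volume (cst k)).setIntegral_preimage_emb
      (MeasurableEquiv.addRight (cst k)).measurableEmbedding u (s k)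
    rw [← this]
    congr 2
    ext x; simp [s]
  have hsum := hasSum_integral_iUnion hs hd (f := g) (μ := volume) hg.integrableOn
  have hsumn := hasSum_integral_iUnion hs hd (f := fun x => ‖g x‖) (μ := volume) hg.norm.integrableOn
  rw [hU, Measure.restrict_univ] at hsum hsumn
  simp only [htr] at hsum hsumn
  have := hasSum_integral_of_summable_integral_norm (μ := volume.restrict B)
    (F := fun k x => g (x + cst k)) (fun k => (hg.comp_add_right (cst k)).integrableOn) hsumn.summable
  exact this.unique hsum

open MeasureTheory in
lemma poisson {n : ℕ} (f : SchwartzMap (Fin n → ℝ) ℂ) (x : Fin n → ℝ) :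
    HasSum (fun b => fhat f (WithLp.toLp 2 (cst b)) * ee (cst b) x) (Zp f x) := by
  obtain ⟨F, hF⟩ := exists_torus f
  have hc : ∀ b, UnitAddTorus.mFourierCoeff F b = fhat f (WithLp.toLp 2 (cst b)) := by
    intro b
    rw [UnitAddTorus.mFourierCoeff_eq_integral F b 0, fhat_apply]
    have hcb : cst (-b) = -cst b := by ext i; simp [cst]
    rw [← unfold_integral (fun v => ee (-cst b) v * f v)]
    · congr 1
      ext y
      rw [mFourier_eq_ee, hF, smul_eq_mul, Zp, ← tsum_mul_left]
      congr 1; ext k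
      rw [ee_add_right, ← hcb, ee_int, mul_one]
    · refine (f.integrable (μ := volume)).bdd_mul (c := 1) (ee_cont _).aestronglyMeasurable ?_
      exact Filter.Eventually.of_forall fun v => (norm_ee _ _).le
  have hs : Summable (UnitAddTorus.mFourierCoeff F) := by
    obtain ⟨C, hC, h⟩ := fhat_decay f (2 * n)
    refine Summable.of_norm ?_
    refine summable_of_decay _ (fun _ => norm_nonneg _) C fun k => ?_
    rw [hc]; exact h _
  have := UnitAddTorus.hasSum_mFourier_series_apply_of_summable hs (fun i => (x i : UnitAddCircle))
  rw [hF] at this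
  simpa only [hc, mFourier_eq_ee, smul_eq_mul] using this

lemma seminorm_mul_bound {n : ℕ} (l m : ℕ) (a b : (Fin n → ℝ) → ℂ) (ha : ContDiff ℝ m a)
    (hb : ContDiff ℝ m b) (P : SchwartzMap (Fin n → ℝ) ℂ) (hP : ∀ x, P x = a x * b x) (D : ℝ)
    (hD : 0 ≤ D)
    (h : ∀ i ≤ m, ∀ j ≤ m, ∀ x, ‖x‖ ^ l * ‖iteratedFDeriv ℝ i a x‖ * ‖iteratedFDeriv ℝ j b x‖ ≤ D) :
    SchwartzMap.seminorm ℂ l m P ≤ 2 ^ m * D := by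
  refine SchwartzMap.seminorm_le_bound ℂ l m _ (by positivity) fun x => ?_
  have e : (P : (Fin n → ℝ) → ℂ) = fun x => a x * b x := funext hP
  rw [e]
  calc _ ≤ ‖x‖ ^ l * ∑ i ∈ Finset.range (m + 1),
      (m.choose i : ℝ) * ‖iteratedFDeriv ℝ i a x‖ * ‖iteratedFDeriv ℝ (m - i) b x‖ := by
        gcongr
        exact norm_iteratedFDeriv_mul_le ha hb x le_rfl
    _ = ∑ i ∈ Finset.range (m + 1), (m.choose i : ℝ) *
        (‖x‖ ^ l * ‖iteratedFDeriv ℝ i a x‖ * ‖iteratedFDeriv ℝ (m - i) b x‖) := by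
        rw [Finset.mul_sum]; refine Finset.sum_congr rfl fun i _ => by ring
    _ ≤ ∑ i ∈ Finset.range (m + 1), (m.choose i : ℝ) * D := by
        refine Finset.sum_le_sum fun i hi => ?_
        gcongr
        exact h i (by have := Finset.mem_range.mp hi; omega) (m - i) (by omega) x
    _ = 2 ^ m * D := by
        rw [← Finset.sum_mul, ← Nat.cast_sum, Nat.sum_range_choose]; push_cast; rfl

lemma summableA {n : ℕ} (f h : SchwartzMap (Fin n → ℝ) ℂ)
    (A : (Fin n → ℤ) → SchwartzMap (Fin n → ℝ) ℂ) (hA : ∀ k x, A k x = h x * f (x + cst k))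
    (l m : ℕ) : Summable fun k => SchwartzMap.seminorm ℂ l m (A k) := by
  obtain ⟨C1, hC1, h1⟩ := schwartz_decay f (2 * n) m
  obtain ⟨C2, hC2, h2⟩ := schwartz_decay h (l + 2 * n) m
  refine Summable.of_nonneg_of_le (fun _ => apply_nonneg _ _) (fun k => ?_)
    ((summable_lattice n).mul_left (2 ^ m * (C2 * C1)))
  have := seminorm_mul_bound l m h (fun x => f (x + cst k)) (h.smooth m)
    ((f.smooth m).comp (contDiff_id.add contDiff_const)) (A k) (hA k)
    ((C2 * C1) * ((1 + ‖cst k‖) ^ (2 * n))⁻¹) (by positivity) ?_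
  · rw [← mul_assoc] at this; exact this
  intro i hi j hj x
  rw [iteratedFDeriv_comp_add_right, ← div_eq_mul_inv, le_div_iff₀ (by positivity)]
  set u := ‖iteratedFDeriv ℝ i h x‖ with hu
  set v := ‖iteratedFDeriv ℝ j f (x + cst k)‖ with hv
  calc _ ≤ (1 + ‖x‖) ^ l * u * v * ((1 + ‖x‖) * (1 + ‖x + cst k‖)) ^ (2 * n) := by
        gcongr
        · linarith
        · exact peetre x (cst k)
    _ = ((1 + ‖x‖) ^ (l + 2 * n) * u) * ((1 + ‖x + cst k‖) ^ (2 * n) * v) := by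
        rw [mul_pow, pow_add]; ring
    _ ≤ _ := by
        gcongr
        · exact h2 i hi x
        · exact h1 j hj _

lemma ee_deriv_bound {n : ℕ} (ξ : Fin n → ℝ) (i : ℕ) (x : Fin n → ℝ) :
    ‖iteratedFDeriv ℝ i (ee ξ) x‖ ≤ (2 * Real.pi * n * ‖ξ‖) ^ i := by
  let L : (Fin n → ℝ) →L[ℝ] ℝ := ∑ j, (2 * Real.pi * ξ j) • ContinuousLinearMap.proj j
  have hL : ‖L‖ ≤ 2 * Real.pi * n * ‖ξ‖ := by
    refine ContinuousLinearMap.opNorm_le_bound _ (by positivity) fun y => ?_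
    simp only [L, _root_.sum_apply, _root_.smul_apply,
      ContinuousLinearMap.proj_apply, smul_eq_mul]
    calc _ ≤ ∑ j : Fin n, ‖2 * Real.pi * ξ j * y j‖ := norm_sum_le _ _
      _ ≤ ∑ j : Fin n, 2 * Real.pi * ‖ξ‖ * ‖y‖ := by
          refine Finset.sum_le_sum fun j _ => ?_
          rw [norm_mul, norm_mul, Real.norm_of_nonneg (by positivity)]
          gcongr
          · exact norm_le_pi_norm ξ j
          · exact norm_le_pi_norm y j
      _ = _ := by simp; ring
  have he : ee ξ = (fun t : ℝ => Complex.exp (t * Complex.I)) ∘ L := by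
    ext y
    simp only [ee, L, Function.comp, _root_.sum_apply, _root_.smul_apply,
      ContinuousLinearMap.proj_apply, smul_eq_mul]
    congr 1
    push_cast
    rw [Finset.mul_sum, Finset.sum_mul]
    refine Finset.sum_congr rfl fun i _ => by ring
  have hexp : ∀ j, iteratedDeriv j (fun t : ℝ => Complex.exp (t * Complex.I)) =
      fun t : ℝ => Complex.I ^ j * Complex.exp (t * Complex.I) := by
    intro j
    induction j with
    | zero => ext t; simp
    | succ j ih =>
      rw [iteratedDeriv_succ, ih]
      ext t
      have h1 : HasDerivAt (fun t : ℝ => Complex.exp (t * Complex.I))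
          (Complex.exp (t * Complex.I) * (1 * Complex.I)) t := by
        have := ((hasDerivAt_id (t : ℂ)).mul_const Complex.I).cexp.comp_ofReal
        simpa using this
      rw [(h1.const_mul (Complex.I ^ j)).deriv]
      ring
  have hcd : ContDiff ℝ i (fun t : ℝ => Complex.exp (t * Complex.I)) :=
    Complex.contDiff_exp.comp (Complex.ofRealCLM.contDiff.mul contDiff_const)
  rw [he, L.iteratedFDeriv_comp_right (n := i) hcd x le_rfl]
  refine (ContinuousMultilinearMap.norm_compContinuousLinearMap_le _ _).trans ?_
  rw [norm_iteratedFDeriv_eq_norm_iteratedDeriv, hexp]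
  simp only [norm_mul, norm_pow, Complex.norm_I, one_pow, Complex.norm_exp_ofReal_mul_I, one_mul,
    Finset.prod_const, Finset.card_univ, Fintype.card_fin]
  gcongr

lemma ee_contDiff {n : ℕ} (ξ : Fin n → ℝ) (m : ℕ) : ContDiff ℝ m (ee ξ) := by
  have hs : ContDiff ℝ m (fun z : Fin n → ℝ => ∑ i, ξ i * z i) :=
    ContDiff.sum fun i _ => contDiff_const.mul (contDiff_apply ℝ ℝ i)
  have hc : ContDiff ℝ m (fun z : Fin n → ℝ => ((∑ i, ξ i * z i : ℝ) : ℂ)) :=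
    Complex.ofRealCLM.contDiff.comp hs
  exact Complex.contDiff_exp.comp (contDiff_const.mul hc)

lemma summableB {n : ℕ} (f h : SchwartzMap (Fin n → ℝ) ℂ)
    (B : (Fin n → ℤ) → SchwartzMap (Fin n → ℝ) ℂ)
    (hB : ∀ b x, B b x = ee (cst b) x * h x)
    (l m : ℕ) : Summable fun b => SchwartzMap.seminorm ℂ l m (fhat f (WithLp.toLp 2 (cst b)) • B b) := by
  obtain ⟨C1, hC1, h1⟩ := fhat_decay f (2 * n + m)
  obtain ⟨C2, hC2, h2⟩ := schwartz_decay h l m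
  set K : ℝ := 2 * Real.pi * n + 1
  have hK : 1 ≤ K := by simp only [K]; linarith [show 0 ≤ 2 * Real.pi * n by positivity]
  refine summable_of_decay _ (fun _ => apply_nonneg _ _) (C1 * (2 ^ m * (K ^ m * C2))) fun k => ?_
  have := seminorm_mul_bound l m (ee (cst k)) h (ee_contDiff _ _) (h.smooth m) (B k) (hB k)
    ((1 + ‖cst k‖) ^ m * (K ^ m * C2)) (by positivity) ?_
  · rw [map_smul_eq_mul]
    calc _ ≤ (1 + ‖cst k‖) ^ (2 * n) * (‖fhat f (WithLp.toLp 2 (cst k))‖ *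
          (2 ^ m * ((1 + ‖cst k‖) ^ m * (K ^ m * C2)))) := by gcongr
      _ = ((1 + ‖cst k‖) ^ (2 * n + m) * ‖fhat f (WithLp.toLp 2 (cst k))‖) *
          (2 ^ m * (K ^ m * C2)) := by rw [pow_add]; ring
      _ ≤ _ := by gcongr; exact h1 _
  intro i hi j hj x
  have e1 : ‖iteratedFDeriv ℝ i (ee (cst k)) x‖ ≤ (K * (1 + ‖cst k‖)) ^ m := by
    refine (ee_deriv_bound _ i x).trans ?_
    calc _ ≤ (K * (1 + ‖cst k‖)) ^ i := by
          gcongr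
          · simp only [K]; linarith
          · linarith
      _ ≤ _ := pow_le_pow_right₀ (by nlinarith [norm_nonneg (cst k)]) hi
  have e2 := h2 j hj x
  calc _ ≤ (1 + ‖x‖) ^ l * (K * (1 + ‖cst k‖)) ^ m * ‖iteratedFDeriv ℝ j h x‖ := by
        gcongr
        linarith
    _ = (K * (1 + ‖cst k‖)) ^ m * ((1 + ‖x‖) ^ l * ‖iteratedFDeriv ℝ j h x‖) := by ring
    _ ≤ (K * (1 + ‖cst k‖)) ^ m * C2 := by gcongr
    _ = _ := by rw [mul_pow]; ring

/-- Key identity. -/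
lemma key_identity {n : ℕ} (f h : SchwartzMap (Fin n → ℝ) ℂ)
    (A B : (Fin n → ℤ) → SchwartzMap (Fin n → ℝ) ℂ)
    (hA : ∀ k x, A k x = h x * f (x + cst k))
    (hB : ∀ b x, B b x = ee (cst b) x * h x)
    (ν : SchwartzMap (Fin n → ℝ) ℂ →L[ℂ] ℂ) :
    ∑' k, ν (A k) = ∑' b, fhat f (WithLp.toLp 2 (cst b)) * ν (B b) := by
  have hh : HasSum (Sum.elim A (fun b => -(fhat f (WithLp.toLp 2 (cst b)) • B b))) 0 := by
    refine hasSum_schwartz_zero _ ?_ ?_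
    · intro l m
      refine Summable.sum _ (summableA f h A hA l m) ?_
      refine (summableB f h B hB l m).congr fun b => ?_
      simp
    · intro x
      have s1 : HasSum (fun k => A k x) (h x * Zp f x) := by
        simp only [hA]
        exact (summable_translates f x).hasSum.mul_left _
      have s2 : HasSum (fun b => (-(fhat f (WithLp.toLp 2 (cst b)) • B b)) x) (-(h x * Zp f x)) := by
        have := ((poisson f x).mul_left (h x)).neg
        refine this.congr_fun fun b => ?_
        simp [hB]; ring
      have := HasSum.sum (f := fun i => (Sum.elim A (fun b => -(fhat f (WithLp.toLp 2 (cst b)) • B b)) i) x)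
        s1 s2
      rw [this.tsum_eq]; ring
  have h2 := hh.mapL ν
  rw [map_zero] at h2
  have h3 := And.intro (h2.summable.comp_injective Sum.inl_injective)
    (h2.summable.comp_injective Sum.inr_injective)
  have h4 := h2.tsum_eq
  rw [Summable.tsum_sum h3.1 h3.2] at h4
  simp only [Function.comp_def, Sum.elim_inl, Sum.elim_inr, map_neg, map_smul, smul_eq_mul, tsum_neg] at h4
  linear_combination h4

lemma exists_mul {n : ℕ} (f g : SchwartzMap (Fin n → ℝ) ℂ) (a : Fin n → ℝ) :
    ∃ P : SchwartzMap (Fin n → ℝ) ℂ, ∀ x, P x = f x * g (x + a) := by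
  refine ⟨SchwartzMap.pairing (ContinuousLinearMap.mul ℂ ℂ) f (g.compSubConstCLM ℂ (-a)), ?_⟩
  intro x
  simp [SchwartzMap.pairing_apply_apply]

lemma exists_bump {E : Type*} [NormedAddCommGroup E] [NormedSpace ℝ E] [FiniteDimensional ℝ E]
    [HasContDiffBump E] (c : E) (r : ℝ) (hr : 0 < r) :
    ∃ f : SchwartzMap E ℂ, f c = 1 ∧ ∀ x, r ≤ ‖x - c‖ → f x = 0 := by
  let b : ContDiffBump c := ⟨r / 2, r, by linarith, by linarith⟩
  have h1 : HasCompactSupport (fun x => ((b x : ℝ) : ℂ)) :=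
    b.hasCompactSupport.comp_left (g := fun t : ℝ => (t : ℂ)) (by simp)
  have h2 : ContDiff ℝ ((⊤ : ℕ∞) : WithTop ℕ∞) (fun x => ((b x : ℝ) : ℂ)) :=
    Complex.ofRealCLM.contDiff.comp b.contDiff
  refine ⟨h1.toSchwartzMap h2, ?_, ?_⟩
  · change ((b c : ℝ) : ℂ) = 1
    rw [b.one_of_mem_closedBall (Metric.mem_closedBall_self (by simp only [b]; linarith))]
    simp
  · intro x hx
    change ((b x : ℝ) : ℂ) = 0
    rw [b.zero_of_le_dist (by rw [dist_eq_norm]; exact hx)]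
    simp

lemma one_le_norm_cst {n : ℕ} (b : Fin n → ℤ) (hb : b ≠ 0) : 1 ≤ ‖cst b‖ := by
  obtain ⟨i, hi⟩ := Function.ne_iff.mp hb
  refine le_trans ?_ (norm_le_pi_norm (cst b) i)
  simp only [cst, Real.norm_eq_abs]
  exact_mod_cast Int.one_le_abs hi

lemma exists_window (n : ℕ) : ∃ h : SchwartzMap (Fin n → ℝ) ℂ,
    ∀ b : Fin n → ℤ, fhat h (WithLp.toLp 2 (cst b)) = if b = 0 then 1 else 0 := by
  obtain ⟨g, hg0, hg⟩ := exists_bump (0 : EuclideanSpace ℝ (Fin n)) 1 one_pos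
  obtain ⟨h, hh⟩ := exists_fhat_eq g
  refine ⟨h, fun b => ?_⟩
  rw [hh]
  split_ifs with hb
  · subst hb
    have : (WithLp.toLp 2 (cst (0 : Fin n → ℤ)) : EuclideanSpace ℝ (Fin n)) = 0 := by
      ext i; simp [cst]
    rw [this, hg0]
  · apply hg
    rw [sub_zero]
    refine (one_le_norm_cst b hb).trans ?_
    rw [pi_norm_le_iff_of_nonneg (norm_nonneg _)]
    intro i
    exact PiLp.norm_apply_le (WithLp.toLp 2 (cst b)) i

lemma vanish {n : ℕ} (t : Fin n → ℝ)
    (md : (Fin n → ℝ) → SchwartzMap (Fin n → ℝ) ℂ → SchwartzMap (Fin n → ℝ) ℂ)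
    (hmd : ∀ ξ f z, md ξ f z = ee ξ z * f z)
    (ν : SchwartzMap (Fin n → ℝ) ℂ →L[ℂ] ℂ)
    (hT : ∀ (a : Fin n → ℤ) (f g : SchwartzMap (Fin n → ℝ) ℂ), (∀ z, g z = f (z + cst a)) →
      ν g = ee t (cst a) * ν f)
    (h : SchwartzMap (Fin n → ℝ) ℂ)
    (hh : ∀ b : Fin n → ℤ, fhat h (WithLp.toLp 2 (cst b)) = if b = 0 then 1 else 0)
    (hz : ∀ b : Fin n → ℤ, ν (md (cst b + t) h) = 0) : ν = 0 := by
  ext f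
  choose A1 hA1 using fun k : Fin n → ℤ => exists_mul f h (cst k)
  choose A2 hA2 using fun k : Fin n → ℤ => exists_mul (md t h) (md (-t) f) (cst k)
  have k1 := key_identity h f A1 (fun b => md (cst b) f) hA1 (fun b x => hmd _ _ _) ν
  have k2 := key_identity (md (-t) f) (md t h) A2 (fun b => md (cst b) (md t h)) hA2
    (fun b x => hmd _ _ _) ν
  have e1 : ∑' b, fhat h (WithLp.toLp 2 (cst b)) * ν (md (cst b) f) = ν f := by
    rw [tsum_eq_single 0]
    · rw [hh, if_pos rfl, one_mul]
      congr 1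
      ext z
      have : cst (0 : Fin n → ℤ) = 0 := by ext i; simp [cst]
      rw [hmd, this, ee_zero, one_mul]
    · intro b hb
      rw [hh, if_neg hb, zero_mul]
  have e2 : ∑' b, fhat (md (-t) f) (WithLp.toLp 2 (cst b)) * ν (md (cst b) (md t h)) = 0 := by
    have : ∀ b : Fin n → ℤ, md (cst b) (md t h) = md (cst b + t) h := by
      intro b; ext z; simp only [hmd, ee_add_left]; ring
    simp [this, hz]
  have e3 : ∀ k, ν (A1 k) = ν (A2 (-k)) := by
    intro k
    have hne : ee t (cst k) ≠ 0 := by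
      intro h0; have := norm_ee t (cst k); rw [h0] at this; simp at this
    have hc : cst (-k) = -cst k := by ext i; simp [cst]
    have := hT k (A2 (-k)) (ee t (cst k) • A1 k) (fun z => by
      rw [hA2, hmd, hmd, hc, add_neg_cancel_right, ee_add_right]
      simp only [_root_.smul_apply, hA1, smul_eq_mul]
      linear_combination (-(ee t (cst k) * h (z + cst k) * f z)) * ee_neg_mul t z)
    rw [map_smul, smul_eq_mul] at this
    exact mul_left_cancel₀ hne this
  have e4 : ∑' k, ν (A1 k) = ∑' k, ν (A2 k) := by
    simp only [e3]
    exact (Equiv.neg (Fin n → ℤ)).tsum_eq (fun k => ν (A2 k))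
  rw [e1] at k1
  rw [e2] at k2
  rw [← k1, e4, k2]; rfl

lemma vanish' {n : ℕ} (N : ℕ) (hN : 1 ≤ N) (t : Fin n → ℝ)
    (md : (Fin n → ℝ) → SchwartzMap (Fin n → ℝ) ℂ → SchwartzMap (Fin n → ℝ) ℂ)
    (hmd : ∀ ξ f z, md ξ f z = ee ξ z * f z)
    (ν : SchwartzMap (Fin n → ℝ) ℂ →L[ℂ] ℂ)
    (hT : ∀ (a : Fin n → ℤ) (f g : SchwartzMap (Fin n → ℝ) ℂ), (∀ z, g z = f (z + cst a)) →
      ν g = ee t (cst a) * ν f)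
    (hM : ∀ (b : Fin n → ℤ) (f g : SchwartzMap (Fin n → ℝ) ℂ),
      (∀ z, g z = ee ((N : ℝ) • cst b) z * f z) → ν f = 0 → ν g = 0)
    (h : SchwartzMap (Fin n → ℝ) ℂ)
    (hh : ∀ b : Fin n → ℤ, fhat h (WithLp.toLp 2 (cst b)) = if b = 0 then 1 else 0)
    (hz : ∀ r : Fin n → Fin N, ν (md (cst (fun i => ((r i : ℕ) : ℤ)) + t) h) = 0) : ν = 0 := by
  refine vanish t md hmd ν hT h hh fun b => ?_
  have hN' : (0 : ℤ) < N := by exact_mod_cast hN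
  have hlt : ∀ i, (b i % (N : ℤ)).toNat < N := fun i => by
    have := Int.emod_lt_of_pos (b i) hN'
    have := Int.emod_nonneg (b i) hN'.ne'
    omega
  refine hM (fun i => b i / (N : ℤ)) (md (cst (fun i => ((b i % (N : ℤ)).toNat : ℤ)) + t) h) _ ?_
    (hz fun i => ⟨(b i % (N : ℤ)).toNat, hlt i⟩)
  intro z
  rw [hmd, hmd, ← mul_assoc, ← ee_add_left, ← add_assoc]
  congr 3
  ext i
  have h1 : ((b i % (N : ℤ)).toNat : ℤ) = b i % (N : ℤ) :=
    Int.toNat_of_nonneg (Int.emod_nonneg (b i) hN'.ne')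
  have h2 := Int.mul_ediv_add_emod (b i) N
  simp only [cst, Pi.add_apply, Pi.smul_apply, smul_eq_mul]
  rw [h1]
  exact_mod_cast h2.symm

lemma rhoDual_lattice (n N : ℕ) (w : (Fin n → ℤ) × (Fin n → ℤ)) (f : (Fin n → ℝ) → ℂ)
    (z : Fin n → ℝ) :
    rhoDualTest n N (castVec n w)
      (Complex.exp (Real.pi * Complex.I * ((QR n (castVec n w) : ℝ) : ℂ))) f z =
    ee ((N : ℝ) • cst w.2) z * f (z + cst w.1) := by
  unfold rhoDualTest
  have h1 : (castVec n w).1 = cst w.1 := rfl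
  rw [h1]
  congr 1
  rw [← Complex.exp_nat_mul, ← Complex.exp_add, ee, Complex.exp_eq_exp_iff_exists_int]
  refine ⟨(N : ℤ) * ∑ i, w.1 i * w.2 i, ?_⟩
  simp only [QR, castVec, cst, Pi.smul_apply, smul_eq_mul, mul_assoc, ← Finset.mul_sum]
  push_cast
  ring

lemma rhoDual_mod (n N : ℕ) (hN : 1 ≤ N) (ξ : Fin n → ℝ) (f : (Fin n → ℝ) → ℂ) (z : Fin n → ℝ) :
    rhoDualTest n N (0, (N : ℝ)⁻¹ • ξ) 1 f z = ee ξ z * f z := by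
  have : (N : ℂ) ≠ 0 := by exact_mod_cast (by omega : N ≠ 0)
  simp only [rhoDualTest, QR, ee, Pi.smul_apply, smul_eq_mul, mul_assoc, ← Finset.mul_sum]
  simp
  left
  congr 1
  field_simp

lemma comb_eq (n N : ℕ) (θ : (Fin n → ℝ) × (Fin n → ℝ)) (j : Fin n → ℤ) (f : (Fin n → ℝ) → ℂ) :
    comb n N θ j f = (((N : ℝ) ^ (-(n : ℝ) / 2) : ℝ) : ℂ) *
      ∑' k : Fin n → ℤ, ee (-θ.2) (cst k) * f (cst k + (N : ℝ)⁻¹ • (cst j - θ.1)) := by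
  unfold comb
  congr 2
  ext k
  congr 1
  · simp [ee, cst]
  · congr 1; ext i; simp [cst]; ring

lemma comb_mem (n N : ℕ) (hN : 1 ≤ N) (θ : (Fin n → ℝ) × (Fin n → ℝ)) (j : Fin n → ℤ)
    (w : (Fin n → ℤ) × (Fin n → ℤ)) (f : (Fin n → ℝ) → ℂ) :
    comb n N θ j (fun z => ee ((N : ℝ) • cst w.2) z * f (z + cst w.1)) =
      Complex.exp (2 * Real.pi * Complex.I *
                  ((sigmaR n θ (castVec n w) : ℝ) : ℂ)) * comb n N θ j f := by
  have hN0 : (N : ℝ) ≠ 0 := by exact_mod_cast (by omega : N ≠ 0)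
  have hE : Complex.exp (2 * Real.pi * Complex.I * ((sigmaR n θ (castVec n w) : ℝ) : ℂ)) =
      ee θ.2 (cst w.1) * ee (cst w.2) (-θ.1) := by
    simp only [ee, sigmaR, castVec, cst, ← Complex.exp_add]
    congr 1
    simp
    ring
  rw [hE, comb_eq, comb_eq, mul_left_comm]
  congr 1
  rw [← tsum_mul_left, ← (Equiv.addRight w.1).tsum_eq
    (fun k => ee θ.2 (cst w.1) * ee (cst w.2) (-θ.1) *
      (ee (-θ.2) (cst k) * f (cst k + (N : ℝ)⁻¹ • (cst j - θ.1))))]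
  congr 1
  ext k
  have hc : cst (k + w.1) = cst k + cst w.1 := by ext i; simp [cst]
  have h1 : ee ((N : ℝ) • cst w.2) (cst k + (N : ℝ)⁻¹ • (cst j - θ.1)) = ee (cst w.2) (-θ.1) := by
    have : ee ((N : ℝ) • cst w.2) (cst k + (N : ℝ)⁻¹ • (cst j - θ.1)) =
        ee (cst w.2) ((cst (fun i => (N : ℤ) * k i) + cst j) + -θ.1) := by
      simp only [ee]
      congr 3
      refine Finset.sum_congr rfl fun i _ => ?_
      simp [cst]
      field_simp
      ring
    rw [this, ee_add_right, ee_add_right, ee_int, ee_int, one_mul, one_mul]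
  simp only [Equiv.coe_addRight]
  rw [hc, h1, ee_add_right, add_right_comm (cst k) (cst w.1)]
  linear_combination (-(ee (-θ.2) (cst k) * ee (cst w.2) (-θ.1) *
    f (cst k + (N : ℝ)⁻¹ • (cst j - θ.1) + cst w.1))) * ee_neg_mul θ.2 (cst w.1)

lemma comb_dual (n N : ℕ) (hN : 1 ≤ N) (θ : (Fin n → ℝ) × (Fin n → ℝ)) (j : Fin n → Fin N) :
    ∃ f : SchwartzMap (Fin n → ℝ) ℂ, ∀ l : Fin n → Fin N,
      (comb n N θ (fun i => ((l i : ℕ) : ℤ)) f ≠ 0 ↔ l = j) := by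
  have hN0 : (0 : ℝ) < N := by exact_mod_cast hN
  obtain ⟨f, hf1, hf⟩ := exists_bump ((N : ℝ)⁻¹ • (cst (fun i => ((j i : ℕ) : ℤ)) - θ.1))
    ((N : ℝ)⁻¹) (by positivity)
  have hval : ∀ (l : Fin n → Fin N) (k : Fin n → ℤ), ¬ (l = j ∧ k = 0) →
      f (cst k + (N : ℝ)⁻¹ • (cst (fun i => ((l i : ℕ) : ℤ)) - θ.1)) = 0 := by
    intro l k hlk
    apply hf
    have e : cst k + (N : ℝ)⁻¹ • (cst (fun i => ((l i : ℕ) : ℤ)) - θ.1) -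
        (N : ℝ)⁻¹ • (cst (fun i => ((j i : ℕ) : ℤ)) - θ.1) =
        (N : ℝ)⁻¹ • cst (fun i => (N : ℤ) * k i + ((l i : ℕ) : ℤ) - ((j i : ℕ) : ℤ)) := by
      ext i
      simp [cst]
      field_simp
      ring
    rw [e, norm_smul, norm_inv, Real.norm_natCast]
    refine le_mul_of_one_le_right (by positivity) (one_le_norm_cst _ ?_)
    intro h0
    apply hlk
    have hi : ∀ i, k i = 0 ∧ (l i : ℕ) = j i := by
      intro i
      have h1 := congrFun h0 i
      simp only [Pi.zero_apply] at h1
      have h2 := (l i).isLt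
      have h3 := (j i).isLt
      have h4 : k i = 0 := by
        by_contra hk
        rcases lt_or_gt_of_ne hk with hk | hk
        · nlinarith
        · nlinarith
      rw [h4] at h1
      refine ⟨h4, by omega⟩
    exact ⟨funext fun i => Fin.ext (hi i).2, funext fun i => (hi i).1⟩
  refine ⟨f, fun l => ⟨fun h => ?_, fun h => ?_⟩⟩
  · by_contra hl
    apply h
    rw [comb_eq]
    simp [hval l _ (fun hh => hl hh.1)]
  · subst h
    rw [comb_eq, tsum_eq_single 0]
    · have : cst (0 : Fin n → ℤ) = 0 := by ext i; simp [cst]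
      rw [this, zero_add, hf1, ee_comm, ee_zero]
      have : (N : ℝ) ^ (-(n : ℝ) / 2) ≠ 0 := (Real.rpow_pos_of_pos hN0 _).ne'
      simpa using this
    · intro k hk
      rw [hval l k (fun hh => hk hh.2), mul_zero]


lemma lin_end {V ι : Type*} [AddCommGroup V] [Module ℂ V] [Fintype ι] (S : Submodule ℂ V)
    (e : ι → V) (hmem : ∀ j, e j ∈ S) (hli : LinearIndependent ℂ e) (Φ : V →ₗ[ℂ] (ι → ℂ))
    (hΦ : ∀ v ∈ S, Φ v = 0 → v = 0) :
    Module.finrank ℂ S = Fintype.card ι ∧ Submodule.span ℂ (Set.range e) = S := by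
  have hinj : Function.Injective (Φ.comp S.subtype) := by
    refine (injective_iff_map_eq_zero _).mpr fun v hv => ?_
    exact Subtype.ext (hΦ v.1 v.2 hv)
  have : Module.Finite ℂ S := Module.Finite.of_injective _ hinj
  let e' : ι → S := fun j => ⟨e j, hmem j⟩
  have he : LinearIndependent ℂ e' := LinearIndependent.of_comp S.subtype hli
  have hle : Module.finrank ℂ S ≤ Fintype.card ι := by
    have := LinearMap.finrank_le_finrank_of_injective hinj
    rwa [Module.finrank_fintype_fun_eq_card] at this
  have hfr : Module.finrank ℂ S = Fintype.card ι := le_antisymm hle he.fintype_card_le_finrank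
  have hspan : Submodule.span ℂ (Set.range e') = ⊤ :=
    he.span_eq_top_of_card_eq_finrank' hfr.symm
  refine ⟨hfr, ?_⟩
  have h1 := congrArg (Submodule.map S.subtype) hspan
  rw [Submodule.map_span, Submodule.map_top, Submodule.range_subtype, ← Set.range_comp] at h1
  exact h1

/-- the space `H_{N,θ}` of quasi-periodic tempered distributions is a complex
subspace of `𝒮'(ℝⁿ)` of dimension `N^n`, with basis the Dirac combs `e^θ_j`,
`j ∈ {0,…,N−1}ⁿ`.  The dual action of the Schrödinger representation is encoded by the
(unique, existing) continuous linear maps `rhoT x ζ : 𝒮(ℝⁿ) → 𝒮(ℝⁿ)`,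
`(rhoT x ζ f)(z) = ζ^N e^{2πiN(⟨p,z⟩+⟨q,p⟩/2)} f(z+q)`, and the Dirac combs by the (unique,
existing) tempered distributions `Ecomb j` with `Ecomb j (f) = N^{−n/2} Σ_k e^{−2πi⟨θ₂,k⟩}
f(k+(j−θ₁)/N)`. -/
theorem quasiPeriodic_dimension (n N : ℕ) (hN : 1 ≤ N) (θ : (Fin n → ℝ) × (Fin n → ℝ))
    (rhoT : (Fin n → ℝ) × (Fin n → ℝ) → ℂ →
      (SchwartzMap ((Fin n) → ℝ) ℂ →L[ℂ] SchwartzMap ((Fin n) → ℝ) ℂ))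
    (hrhoT : ∀ x ζ f z, rhoT x ζ f z = rhoDualTest n N x ζ (⇑f) z)
    (Ecomb : (Fin n → ℤ) → (SchwartzMap ((Fin n) → ℝ) ℂ →L[ℂ] ℂ))
    (hEcomb : ∀ j f, Ecomb j f = comb n N θ j (⇑f)) :
    ∃ S : Submodule ℂ (SchwartzMap ((Fin n) → ℝ) ℂ →L[ℂ] ℂ),
      (S : Set (SchwartzMap ((Fin n) → ℝ) ℂ →L[ℂ] ℂ))
        = {ν | ∀ w : (Fin n → ℤ) × (Fin n → ℤ), ∀ f,
            ν (rhoT (castVec n w)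
                (Complex.exp (Real.pi * Complex.I * ((QR n (castVec n w) : ℝ) : ℂ))) f)
              = Complex.exp (2 * Real.pi * Complex.I *
                  ((sigmaR n θ (castVec n w) : ℝ) : ℂ)) * ν f} ∧
      Module.finrank ℂ S = N ^ n ∧
      (∀ j : Fin n → Fin N, Ecomb (fun i => ((j i : ℕ) : ℤ)) ∈ S) ∧
      LinearIndependent ℂ (fun j : Fin n → Fin N => Ecomb (fun i => ((j i : ℕ) : ℤ))) ∧
      Submodule.span ℂ
          (Set.range (fun j : Fin n → Fin N => Ecomb (fun i => ((j i : ℕ) : ℤ)))) = S := by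
  have hlat : ∀ (w : (Fin n → ℤ) × (Fin n → ℤ)) (f : SchwartzMap (Fin n → ℝ) ℂ) (z : Fin n → ℝ),
      rhoT (castVec n w) (Complex.exp (Real.pi * Complex.I * ((QR n (castVec n w) : ℝ) : ℂ))) f z
        = ee ((N : ℝ) • cst w.2) z * f (z + cst w.1) := fun w f z => by
    rw [hrhoT, rhoDual_lattice]
  obtain ⟨S, hS⟩ : ∃ S : Submodule ℂ (SchwartzMap ((Fin n) → ℝ) ℂ →L[ℂ] ℂ),
      (S : Set (SchwartzMap ((Fin n) → ℝ) ℂ →L[ℂ] ℂ))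
        = {ν | ∀ w : (Fin n → ℤ) × (Fin n → ℤ), ∀ f,
            ν (rhoT (castVec n w)
                (Complex.exp (Real.pi * Complex.I * ((QR n (castVec n w) : ℝ) : ℂ))) f)
              = Complex.exp (2 * Real.pi * Complex.I *
                  ((sigmaR n θ (castVec n w) : ℝ) : ℂ)) * ν f} := ⟨
    { carrier := {ν | ∀ w : (Fin n → ℤ) × (Fin n → ℤ), ∀ f,
            ν (rhoT (castVec n w)
                (Complex.exp (Real.pi * Complex.I * ((QR n (castVec n w) : ℝ) : ℂ))) f)
              = Complex.exp (2 * Real.pi * Complex.I *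
                  ((sigmaR n θ (castVec n w) : ℝ) : ℂ)) * ν f}
      add_mem' := by
        intro a b ha hb w f
        rw [_root_.add_apply, _root_.add_apply, ha w f, hb w f, mul_add]
      zero_mem' := by
        intro w f
        simp
      smul_mem' := by
        intro c a ha w f
        rw [_root_.smul_apply, _root_.smul_apply, ha w f, smul_eq_mul, smul_eq_mul, mul_left_comm] }, rfl⟩
  have hmem : ∀ j : Fin n → Fin N, Ecomb (fun i => ((j i : ℕ) : ℤ)) ∈ S := by
    intro j
    rw [← SetLike.mem_coe, hS]
    intro w f
    rw [hEcomb, hEcomb, ← comb_mem n N hN]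
    congr 1
    ext z
    exact hlat w f z
  have hli : LinearIndependent ℂ (fun j : Fin n → Fin N => Ecomb (fun i => ((j i : ℕ) : ℤ))) := by
    rw [Fintype.linearIndependent_iff]
    intro g hg j
    obtain ⟨f, hf⟩ := comb_dual n N hN θ j
    have h1 := congrArg (fun ν : SchwartzMap ((Fin n) → ℝ) ℂ →L[ℂ] ℂ => ν f) hg
    simp only [_root_.sum_apply, _root_.smul_apply, hEcomb, smul_eq_mul, _root_.zero_apply] at h1
    rw [Finset.sum_eq_single j] at h1
    · exact (mul_eq_zero.mp h1).resolve_right ((hf j).mpr rfl)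
    · intro l _ hl
      rw [not_ne_iff.mp (mt (hf l).mp hl), mul_zero]
    · simp
  obtain ⟨h, hh⟩ := exists_window n
  let Φ : (SchwartzMap ((Fin n) → ℝ) ℂ →L[ℂ] ℂ) →ₗ[ℂ] ((Fin n → Fin N) → ℂ) :=
    { toFun := fun ν r => ν (rhoT (0, (N : ℝ)⁻¹ • (cst (fun i => ((r i : ℕ) : ℤ)) + θ.2)) 1 h)
      map_add' := fun a b => by ext r; simp only [_root_.add_apply, Pi.add_apply]
      map_smul' := fun c a => by
        ext r; simp only [_root_.smul_apply, Pi.smul_apply, RingHom.id_apply] }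
  have hΦ : ∀ ν ∈ S, Φ ν = 0 → ν = 0 := by
    intro ν hν h0
    rw [← SetLike.mem_coe, hS] at hν
    have hν' : ∀ (w : (Fin n → ℤ) × (Fin n → ℤ)) (f g : SchwartzMap (Fin n → ℝ) ℂ),
        (∀ z, g z = ee ((N : ℝ) • cst w.2) z * f (z + cst w.1)) →
        ν g = Complex.exp (2 * Real.pi * Complex.I *
                  ((sigmaR n θ (castVec n w) : ℝ) : ℂ)) * ν f := by
      intro w f g hfg
      rw [← hν w f]
      congr 1
      ext z
      rw [hlat, hfg]
    have hc0 : cst (0 : Fin n → ℤ) = 0 := by ext i; simp [cst]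
    refine vanish' N hN θ.2 (fun ξ f => rhoT (0, (N : ℝ)⁻¹ • ξ) 1 f) ?_ ν ?_ ?_ h hh ?_
    · intro ξ f z
      rw [hrhoT, rhoDual_mod n N hN]
    · intro a f g hfg
      rw [hν' (a, 0) f g (fun z => by
        simp only [hc0, smul_zero, ee_zero, one_mul]; exact hfg z)]
      congr 1
      simp [sigmaR, castVec, ee, cst]
    · intro b f g hfg hf0
      rw [hν' (0, b) f g (fun z => by simp only [hc0, add_zero]; exact hfg z), hf0, mul_zero]
    · intro r
      exact congrFun h0 r
  obtain ⟨hfr, hspan⟩ := lin_end S _ hmem hli Φ hΦ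
  refine ⟨S, hS, ?_, hmem, hli, hspan⟩
  rw [hfr]
  simp
end

section
/- Let N ≥ 1 be an integer and let u : ℝ^{2n} → ℂ be a smooth function satisfying the quasi-periodicity condition u(x+w) = e^{−πiN(Q(w)+σ(w,x))} u(x) for all x ∈ ℝ^{2n} and all w ∈ ℤ^{2n}. Then there exist Schwartz functions f_j ∈ 𝒮(ℝⁿ), indexed by j ∈ {0,1,…,N−1}ⁿ, such that u(x) = Σ_{j∈{0,…,N−1}ⁿ} Σ_{k∈ℤⁿ} (ρ_N(x) f_j)(k + j/N) for all x ∈ ℝ^{2n}, with absolute convergence of the inner series. (This is the surjectivity of the intertwining map U_{N,0} onto the smooth N-th Fourier mode of the prequantum bundle.) -/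
open BigOperators

set_option linter.unusedSectionVars false

namespace Intw
open MeasureTheory Set Filter Topology ContDiff

abbrev box (n : ℕ) (a : Fin n → ℝ) : Set (Fin n → ℝ) := {x | ∀ i, x i ∈ Ioc (a i) (a i + 1)}

lemma box_subset (n : ℕ) (a : Fin n → ℝ) : box n a ⊆ Icc a (a + 1) := by
  intro x hx
  exact ⟨fun i => (hx i).1.le, fun i => (hx i).2⟩

lemma box_meas (n : ℕ) (a : Fin n → ℝ) : MeasurableSet (box n a) :=
  MeasurableSet.univ_pi' (fun _ => measurableSet_Ioc)

instance box_fin (n : ℕ) (a : Fin n → ℝ) : IsFiniteMeasure (volume.restrict (box n a)) := by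
  constructor
  rw [Measure.restrict_apply_univ]
  exact (measure_mono (box_subset n a)).trans_lt isCompact_Icc.measure_lt_top

lemma integrable_box {n : ℕ} {E : Type} [NormedAddCommGroup E] [NormedSpace ℝ E]
    {h : (Fin n → ℝ) → E} (hh : Continuous h) (a : Fin n → ℝ) :
    Integrable h (volume.restrict (box n a)) :=
  (hh.continuousOn.integrableOn_compact isCompact_Icc).mono_set (box_subset n a)

/-- lift to the torus -/
noncomputable def lift {n : ℕ} {E : Type} (h : (Fin n → ℝ) → E) : UnitAddTorus (Fin n) → E :=
  fun t => h (fun i => (AddCircle.equivIco 1 0 (t i) : ℝ))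

lemma lift_coe {n : ℕ} {E : Type} {h : (Fin n → ℝ) → E}
    (hp : ∀ p (b : Fin n → ℤ), h (p + fun i => (b i : ℝ)) = h p) (x : Fin n → ℝ) :
    lift h (fun i => (x i : UnitAddCircle)) = h x := by
  have : x = (fun i => Int.fract (x i)) + fun i => ((⌊x i⌋ : ℤ) : ℝ) := by
    ext i; simp
  conv_rhs => rw [this, hp]
  unfold lift
  congr 1
  ext i
  simp

lemma continuous_lift {n : ℕ} {E : Type} [TopologicalSpace E] {h : (Fin n → ℝ) → E}
    (hp : ∀ p (b : Fin n → ℤ), h (p + fun i => (b i : ℝ)) = h p) (hc : Continuous h) :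
    Continuous (lift h) := by
  have hq : IsOpenQuotientMap (Pi.map (fun (_ : Fin n) (x : ℝ) => (x : UnitAddCircle))) :=
    IsOpenQuotientMap.piMap (fun _ => QuotientAddGroup.isOpenQuotientMap_mk)
  rw [hq.isQuotientMap.continuous_iff]
  convert hc using 1
  ext x
  exact lift_coe hp x

lemma integral_box_eq {n : ℕ} {E : Type} [NormedAddCommGroup E] [NormedSpace ℝ E]
    {h : (Fin n → ℝ) → E}
    (hp : ∀ p (b : Fin n → ℤ), h (p + fun i => (b i : ℝ)) = h p) (a : Fin n → ℝ) :
    ∫ p in box n a, h p = ∫ p in box n 0, h p := by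
  have h1 := UnitAddTorus.integral_preimage (lift h) a
  have h2 := UnitAddTorus.integral_preimage (lift h) 0
  simp only [lift_coe hp] at h1 h2
  rw [← h1, ← h2]

lemma integral_box_shift {n : ℕ} {E : Type} [NormedAddCommGroup E] [NormedSpace ℝ E]
    {h : (Fin n → ℝ) → E}
    (hp : ∀ p (b : Fin n → ℤ), h (p + fun i => (b i : ℝ)) = h p) (s : Fin n → ℝ) :
    ∫ p in box n 0, h (s + p) = ∫ p in box n 0, h p := by
  rw [← integral_box_eq hp s]
  have := (measurePreserving_add_left (volume : Measure (Fin n → ℝ)) s).setIntegral_preimage_emb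
    (measurableEmbedding_addLeft s) h (box n s)
  rw [← this]
  congr 2
  ext x
  simp only [mem_ofPred_eq, mem_preimage, Pi.add_apply, Pi.zero_apply, mem_Ioc]
  refine forall_congr' fun i => ?_
  constructor <;> rintro ⟨h1, h2⟩ <;> constructor <;> linarith

lemma hasFDerivAt_J {n : ℕ} {E : Type} [NormedAddCommGroup E] [NormedSpace ℝ E]
    {g : (Fin n → ℝ) × (Fin n → ℝ) → E} (hg : ContDiff ℝ ∞ g) (x : (Fin n → ℝ) × (Fin n → ℝ)) :
    HasFDerivAt (fun x => ∫ p in box n 0, g (x + (0, p)))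
      (∫ p in box n 0, fderiv ℝ g (x + (0, p))) x := by
  have hd : Continuous (fderiv ℝ g) := hg.continuous_fderiv (by simp)
  obtain ⟨C, hC⟩ := ((isCompact_closedBall x 1).prod (isCompact_Icc (a := (0 : Fin n → ℝ)) (b := 0 + 1))).exists_bound_of_continuousOn
    (f := fun z : ((Fin n → ℝ) × (Fin n → ℝ)) × (Fin n → ℝ) => fderiv ℝ g (z.1 + (0, z.2)))
    (by fun_prop)
  refine hasFDerivAt_integral_of_dominated_of_fderiv_le (s := Metric.closedBall x 1)
    (F' := fun x p => fderiv ℝ g (x + (0, p))) (bound := fun _ => C)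
    (Metric.closedBall_mem_nhds x one_pos) ?_ ?_ ?_ ?_ ?_ ?_
  · refine Eventually.of_forall fun y => ?_
    have := hg.continuous
    exact (integrable_box (by fun_prop) _).aestronglyMeasurable
  · have := hg.continuous
    exact (integrable_box (by fun_prop) _)
  · exact (integrable_box (by fun_prop) _).aestronglyMeasurable
  · refine (ae_restrict_iff' (box_meas n 0)).2 (Eventually.of_forall fun p hp y hy => ?_)
    exact hC (y, p) ⟨hy, box_subset n 0 hp⟩
  · exact integrable_const _
  · refine Eventually.of_forall fun p y _ => ?_
    have h1 : HasFDerivAt g (fderiv ℝ g (y + (0, p))) (y + (0, p)) :=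
      ((hg.differentiable (by simp)) _).hasFDerivAt
    exact (hasFDerivAt_comp_add_right (0, p)).2 h1

lemma summable_lat {n : ℕ} (f : SchwartzMap (Fin n → ℝ) ℂ) (y : Fin n → ℝ) :
    Summable fun k : Fin n → ℤ => ‖f ((fun i => (k i : ℝ)) - y)‖ := by
  let b := Pi.basisFun ℝ (Fin n)
  let L := Submodule.span ℤ (Set.range b)
  let bL : Module.Basis (Fin n) ℤ L := b.restrictScalars ℤ
  have hr : Module.finrank ℤ L = n := by simpa using Module.finrank_eq_card_basis bL
  have hs := ZLattice.summable_norm_sub_inv_pow L (n+1) (by omega) y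
  have hcoe : ∀ k : Fin n → ℤ, ((bL.equivFun.symm k : L) : Fin n → ℝ) = fun i => (k i : ℝ) := by
    intro k
    ext j
    have hb : ∀ i, ((bL i : L) : Fin n → ℝ) = Pi.single i 1 := fun i => by
      simp only [bL, b]
      rw [Module.Basis.restrictScalars_apply]
      simp
    simp [Module.Basis.equivFun_symm_apply, hb, Finset.sum_apply, Pi.single_apply]
  have hs2 := bL.equivFun.symm.toEquiv.summable_iff.2 hs
  have hs3 : Summable fun k : Fin n → ℤ => (‖(fun i => (k i : ℝ)) - y‖ ^ (n+1))⁻¹ := by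
    refine hs2.congr fun k => ?_
    have := hcoe k
    simp only [Function.comp, LinearEquiv.coe_toEquiv]
    rw [this]
    try simp
  obtain ⟨C, hC⟩ := f.decay (n+1) 0
  refine Summable.of_norm_bounded_eventually (hs3.mul_left C) ?_
  have hfin : ({k : Fin n → ℤ | (fun i => (k i : ℝ)) - y = 0}).Finite := by
    refine Set.Subsingleton.finite ?_
    intro k hk l hl
    ext i
    have h1 := congrFun hk i
    have h2 := congrFun hl i
    simp only [Pi.sub_apply, Pi.zero_apply] at h1 h2
    exact_mod_cast (by linarith : (k i : ℝ) = l i)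
  filter_upwards [hfin.compl_mem_cofinite] with k hk
  have hpos : 0 < ‖(fun i => (k i : ℝ)) - y‖ := norm_pos_iff.2 hk
  have := hC.2 ((fun i => (k i : ℝ)) - y)
  rw [norm_iteratedFDeriv_zero] at this
  rw [norm_norm, ← div_eq_mul_inv, le_div_iff₀ (by positivity), mul_comm]
  exact this

noncomputable def ph {n : ℕ} (N : ℕ) (a : Fin n → ℤ) (p : Fin n → ℝ) : ℂ :=
  Complex.exp (((-(2 * Real.pi * N * ∑ i, (a i : ℝ) * p i) : ℝ) : ℂ) * Complex.I)

lemma norm_ph {n : ℕ} (N : ℕ) (a : Fin n → ℤ) (p : Fin n → ℝ) : ‖ph N a p‖ = 1 :=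
  Complex.norm_exp_ofReal_mul_I _

section
variable {n N : ℕ} {E : Type} [NormedAddCommGroup E] [NormedSpace ℂ E] [NormedSpace ℝ E]
  [IsScalarTower ℝ ℂ E]

structure QP (n N : ℕ) {E : Type} [NormedAddCommGroup E] [NormedSpace ℂ E] [NormedSpace ℝ E]
    (g : (Fin n → ℝ) × (Fin n → ℝ) → E) : Prop where
  smooth : ContDiff ℝ ∞ g
  per : ∀ y p (b : Fin n → ℤ), g (y, p + fun i => (b i : ℝ)) = g (y, p)
  qper : ∀ y p (a : Fin n → ℤ), g (y + (fun i => (a i : ℝ)), p) = ph N a p • g (y, p)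

noncomputable def S (g : (Fin n → ℝ) × (Fin n → ℝ) → E) (y : Fin n → ℝ) : E :=
  ∫ p in box n 0, g (y, p)

noncomputable def dY (g : (Fin n → ℝ) × (Fin n → ℝ) → E) (x : (Fin n → ℝ) × (Fin n → ℝ)) :
    (Fin n → ℝ) →L[ℝ] E :=
  (fderiv ℝ g x).comp (ContinuousLinearMap.inl ℝ _ _)

noncomputable def dP (i : Fin n) (g : (Fin n → ℝ) × (Fin n → ℝ) → E)
    (x : (Fin n → ℝ) × (Fin n → ℝ)) : E :=
  fderiv ℝ g x (0, Pi.single i 1)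

noncomputable def cov (N : ℕ) (i : Fin n) (g : (Fin n → ℝ) × (Fin n → ℝ) → E)
    (x : (Fin n → ℝ) × (Fin n → ℝ)) : E :=
  dP i g x + (((2 * Real.pi * N * x.1 i : ℝ) : ℂ) * Complex.I) • g x

lemma dY_hasFDerivAt {g : (Fin n → ℝ) × (Fin n → ℝ) → E} (hg : ContDiff ℝ ∞ g) (y p) :
    HasFDerivAt (fun y => g (y, p)) (dY g (y, p)) y := by
  have h1 : HasFDerivAt g (fderiv ℝ g (y, p)) (y, p) :=
      ((hg.differentiable (by simp)) _).hasFDerivAt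
  exact h1.comp y (hasFDerivAt_prodMk_left y p)

lemma dP_hasDerivAt {g : (Fin n → ℝ) × (Fin n → ℝ) → E} (hg : ContDiff ℝ ∞ g) (i : Fin n) (y p) :
    HasDerivAt (fun s : ℝ => g (y, p + s • Pi.single i 1)) (dP i g (y, p)) 0 := by
  have h1 : HasFDerivAt g (fderiv ℝ g (y, p)) (y, p + (0:ℝ) • Pi.single i 1) := by
    simpa using ((hg.differentiable (by simp)) (y, p)).hasFDerivAt
  have h2 : HasDerivAt (fun s : ℝ => ((y, p + s • Pi.single i 1) : (Fin n → ℝ) × (Fin n → ℝ)))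
      (0, Pi.single i 1) 0 := by
    refine (hasDerivAt_const _ _).prodMk ?_
    simpa using ((hasDerivAt_id (0:ℝ)).smul_const (Pi.single i (1:ℝ) : Fin n → ℝ)).const_add p
  exact h1.comp_hasDerivAt 0 h2

lemma QP.dY {g : (Fin n → ℝ) × (Fin n → ℝ) → E} (hg : QP n N g) : QP n N (dY g) where
  smooth := by
    have := hg.smooth.fderiv_right (m := ∞) (by simp)
    unfold Intw.dY
    fun_prop
  per y p b := by
    have h1 := dY_hasFDerivAt hg.smooth y (p + fun i => (b i : ℝ))
    simp only [hg.per] at h1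
    exact h1.unique (dY_hasFDerivAt hg.smooth y p)
  qper y p a := by
    have h1 := dY_hasFDerivAt hg.smooth (y + (fun i => (a i : ℝ))) p
    rw [← hasFDerivAt_comp_add_right] at h1
    simp only [hg.qper] at h1
    exact h1.unique ((dY_hasFDerivAt hg.smooth y p).const_smul (ph N a p))

lemma QP.cov {g : (Fin n → ℝ) × (Fin n → ℝ) → E} (hg : QP n N g) (i : Fin n) :
    QP n N (cov N i g) where
  smooth := by
    have := hg.smooth.fderiv_right (m := ∞) (by simp)
    have h2 := hg.smooth
    unfold Intw.cov Intw.dP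
    refine ContDiff.add (by fun_prop) (ContDiff.smul ?_ h2)
    refine ContDiff.mul ?_ contDiff_const
    refine Complex.ofRealCLM.contDiff.comp (contDiff_const.mul ?_)
    fun_prop
  per y p b := by
    have h1 := dP_hasDerivAt hg.smooth i y (p + fun i => (b i : ℝ))
    have e : ∀ s : ℝ, g (y, (p + fun i => (b i : ℝ)) + s • Pi.single i 1) =
        g (y, p + s • Pi.single i 1) := fun s => by
      rw [add_right_comm, hg.per]
    simp only [e] at h1
    have := h1.unique (dP_hasDerivAt hg.smooth i y p)
    simp only [Intw.cov, this, hg.per]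
  qper y p a := by
    have h1 := dP_hasDerivAt hg.smooth i (y + (fun i => (a i : ℝ))) p
    simp only [hg.qper] at h1
    have h2 : HasDerivAt (fun s : ℝ => ph N a (p + s • Pi.single i 1))
        (ph N a p * (((-(2 * Real.pi * N * a i) : ℝ) : ℂ) * Complex.I)) 0 := by
      have e : (fun s : ℝ => ph N a (p + s • Pi.single i 1)) =
          fun s : ℝ => Complex.exp (((-(2 * Real.pi * N * (∑ i, (a i : ℝ) * p i + a i * s)) : ℝ) : ℂ) * Complex.I) := by
        ext s
        simp [ph, mul_add, Finset.sum_add_distrib, Pi.single_apply]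
      rw [e]
      have h3 : HasDerivAt (fun s : ℝ => -(2 * Real.pi * N * (∑ i, (a i : ℝ) * p i + a i * s)))
          (-(2 * Real.pi * N * a i)) 0 := by
        simpa using! (((((hasDerivAt_id (0:ℝ)).const_mul (a i : ℝ)).const_add (∑ i, (a i : ℝ) * p i)).const_mul (2 * Real.pi * N)).neg)
      have h4 := (h3.ofReal_comp.mul_const Complex.I).cexp
      simpa [ph] using h4
    have h5 := h1.unique (h2.smul (dP_hasDerivAt hg.smooth i y p))
    simp only [Intw.cov, h5, hg.qper]
    simp only [zero_smul, add_zero, smul_add, smul_smul, Pi.add_apply]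
    rw [add_assoc, ← add_smul]
    congr 2
    push_cast
    ring

lemma QP.bdd {g : (Fin n → ℝ) × (Fin n → ℝ) → E} (hg : QP n N g) : ∃ C, ∀ x, ‖g x‖ ≤ C := by
  obtain ⟨C, hC⟩ := ((isCompact_Icc (a := (0 : Fin n → ℝ)) (b := 1)).prod
    (isCompact_Icc (a := (0 : Fin n → ℝ)) (b := 1))).exists_bound_of_continuousOn
    hg.smooth.continuous.continuousOn
  refine ⟨C, fun ⟨y, p⟩ => ?_⟩
  have e : ∀ x : Fin n → ℝ, x = (fun i => Int.fract (x i)) + fun i => ((⌊x i⌋ : ℤ) : ℝ) := by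
    intro x; ext i; simp
  rw [e p, hg.per, e y, hg.qper, norm_smul, norm_ph, one_mul]
  exact hC _ ⟨⟨fun i => Int.fract_nonneg _, fun i => (Int.fract_lt_one _).le⟩,
    ⟨fun i => Int.fract_nonneg _, fun i => (Int.fract_lt_one _).le⟩⟩

lemma QP.S_hasFDerivAt [CompleteSpace E] {g : (Fin n → ℝ) × (Fin n → ℝ) → E} (hg : QP n N g) (y) :
    HasFDerivAt (S g) (S (Intw.dY g) y) y := by
  have h0 : HasFDerivAt (fun e : Fin n → ℝ => (e, (0 : Fin n → ℝ)))
    (ContinuousLinearMap.inl ℝ (Fin n → ℝ) (Fin n → ℝ)) y := hasFDerivAt_prodMk_left y 0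
  have h1 := HasFDerivAt.comp (f := fun e : Fin n → ℝ => (e, (0 : Fin n → ℝ))) y
    (hasFDerivAt_J hg.smooth (y, 0)) h0
  have hc := hg.smooth.continuous_fderiv (by simp)
  convert! h1 using 1
  · ext z
    simp [S]
  · simp only [S, Intw.dY, Prod.mk_add_mk, add_zero, zero_add]
    have := ContinuousLinearMap.integral_comp_comm
      (((ContinuousLinearMap.compL ℝ (Fin n → ℝ) ((Fin n → ℝ) × (Fin n → ℝ)) E).flip
        (ContinuousLinearMap.inl ℝ _ _)))
      (integrable_box (h := fun p => fderiv ℝ g (y, p)) (by fun_prop) 0)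
    simpa using this

lemma QP.S_dP [CompleteSpace E] {g : (Fin n → ℝ) × (Fin n → ℝ) → E} (hg : QP n N g) (i y) :
    ∫ p in box n 0, dP i g (y, p) = 0 := by
  have hc := hg.smooth.continuous_fderiv (by simp)
  have h1 := (hasFDerivAt_J hg.smooth (y, 0)).comp 0 (hasFDerivAt_prodMk_right y (0 : Fin n → ℝ))
  have h2 : (fun s => ∫ p in box n 0, g ((y, s) + (0, p))) = fun s => ∫ p in box n 0, g (y, p) := by
    ext s
    simpa using integral_box_shift (h := fun p => g (y, p)) (hg.per y) s
  have h3 := h1.unique (by simpa only [Function.comp_def, h2] using! hasFDerivAt_const _ _)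
  have h4 := congrArg (fun L => L (Pi.single i 1)) h3
  simp only [ContinuousLinearMap.comp_apply, ContinuousLinearMap.inr_apply, Prod.mk_add_mk,
    add_zero, zero_add, _root_.zero_apply] at h4
  rw [← h4, ContinuousLinearMap.integral_apply]
  · rfl
  · exact integrable_box (by fun_prop) 0

lemma QP.S_cov [CompleteSpace E] {g : (Fin n → ℝ) × (Fin n → ℝ) → E} (hg : QP n N g) (i y) :
    S (Intw.cov N i g) y = (((2 * Real.pi * N * y i : ℝ) : ℂ) * Complex.I) • S g y := by
  have hc := hg.smooth.continuous_fderiv (by simp)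
  have hc' := hg.smooth.continuous
  unfold S Intw.cov
  rw [integral_add, hg.S_dP, zero_add]
  · exact integral_smul (((2 * Real.pi * N * y i : ℝ) : ℂ) * Complex.I) (fun p => g (y, p))
  · exact integrable_box (by unfold Intw.dP; fun_prop) 0
  · exact integrable_box (by fun_prop) 0

lemma QP.decay0 [CompleteSpace E] (hN : 1 ≤ N) (k : ℕ) :
    ∀ {g : (Fin n → ℝ) × (Fin n → ℝ) → E} (_ : QP n N g), ∃ C, ∀ y, ‖y‖ ^ k * ‖S g y‖ ≤ C := by
  induction k with
  | zero =>
    intro g hg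
    obtain ⟨C, hC⟩ := hg.bdd
    refine ⟨C * (volume.restrict (box n 0)).real univ, fun y => ?_⟩
    rw [pow_zero, one_mul]
    exact norm_integral_le_of_norm_le_const (Eventually.of_forall fun p => hC (y, p))
  | succ k ih =>
    intro g hg
    choose C hC using fun i => ih (hg.cov i)
    refine ⟨∑ i, C i, fun y => ?_⟩
    have h1 : ‖y‖ ≤ ∑ i, ‖y i‖ :=
      (pi_norm_le_iff_of_nonneg (Finset.sum_nonneg fun i _ => norm_nonneg _)).2 fun i =>
        Finset.single_le_sum (f := fun i => ‖y i‖) (fun i _ => norm_nonneg _) (Finset.mem_univ i)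
    calc ‖y‖ ^ (k + 1) * ‖S g y‖ = ‖y‖ * (‖y‖ ^ k * ‖S g y‖) := by ring
      _ ≤ (∑ i, ‖y i‖) * (‖y‖ ^ k * ‖S g y‖) := by gcongr
      _ = ∑ i, ‖y i‖ * (‖y‖ ^ k * ‖S g y‖) := by rw [Finset.sum_mul]
      _ ≤ ∑ i, C i := by
        refine Finset.sum_le_sum fun i _ => (le_trans ?_ (hC i y))
        rw [hg.S_cov, norm_smul]
        have h2 : ‖y i‖ ≤ ‖((2 * Real.pi * N * y i : ℝ) : ℂ) * Complex.I‖ := by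
          rw [norm_mul, Complex.norm_I, mul_one, Complex.norm_real, norm_mul]
          refine le_mul_of_one_le_left (norm_nonneg _) ?_
          have : (1:ℝ) ≤ N := by exact_mod_cast hN
          rw [Real.norm_of_nonneg (by positivity)]
          nlinarith [Real.pi_gt_three]
        calc ‖y i‖ * (‖y‖ ^ k * ‖S g y‖) = ‖y‖ ^ k * (‖y i‖ * ‖S g y‖) := by ring
          _ ≤ _ := by gcongr
end

lemma QP.contDiff {n N : ℕ} (m : ℕ) : ∀ {E : Type} [NormedAddCommGroup E] [NormedSpace ℂ E] [NormedSpace ℝ E]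
    [IsScalarTower ℝ ℂ E] [CompleteSpace E] {g : (Fin n → ℝ) × (Fin n → ℝ) → E} (_ : QP n N g),
    ContDiff ℝ m (S g) := by
  induction m with
  | zero =>
    intro E _ _ _ _ _ g hg
    exact contDiff_zero.2 (continuous_iff_continuousAt.2 fun y => (hg.S_hasFDerivAt y).continuousAt)
  | succ m ih =>
    intro E _ _ _ _ _ g hg
    rw [Nat.cast_succ]
    exact contDiff_succ_iff_hasFDerivAt.2 ⟨_, ih hg.dY, fun y => hg.S_hasFDerivAt y⟩

lemma QP.decay {n N : ℕ} (hN : 1 ≤ N) (k m : ℕ) : ∀ {E : Type} [NormedAddCommGroup E] [NormedSpace ℂ E]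
    [NormedSpace ℝ E]
    [IsScalarTower ℝ ℂ E] [CompleteSpace E] {g : (Fin n → ℝ) × (Fin n → ℝ) → E} (_ : QP n N g),
    ∃ C, ∀ y, ‖y‖ ^ k * ‖iteratedFDeriv ℝ m (S g) y‖ ≤ C := by
  induction m with
  | zero =>
    intro E _ _ _ _ _ g hg
    simpa using hg.decay0 hN k
  | succ m ih =>
    intro E _ _ _ _ _ g hg
    have e : fderiv ℝ (S g) = S (Intw.dY g) := funext fun y => (hg.S_hasFDerivAt y).fderiv
    obtain ⟨C, hC⟩ := ih hg.dY
    refine ⟨C, fun y => ?_⟩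
    rw [← norm_iteratedFDeriv_fderiv, e]
    exact hC y

noncomputable def QP.schwartz {n N : ℕ} (hN : 1 ≤ N) {g : (Fin n → ℝ) × (Fin n → ℝ) → ℂ}
    (hg : QP n N g) : SchwartzMap (Fin n → ℝ) ℂ where
  toFun := S g
  smooth' := contDiff_infty.2 fun m => hg.contDiff m
  decay' k m := hg.decay hN k m

noncomputable def gj {n : ℕ} (N : ℕ) (u : (Fin n → ℝ) × (Fin n → ℝ) → ℂ) (j : Fin n → ℕ)
    (x : (Fin n → ℝ) × (Fin n → ℝ)) : ℂ :=
  Complex.exp (((-(Real.pi * ∑ i, x.2 i * (j i + N * x.1 i)) : ℝ) : ℂ) * Complex.I) *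
    u ((fun i => (j i : ℝ) / N) - x.1, x.2)

lemma exp_arg_eq {a b : ℝ} (h : a = b) :
    Complex.exp ((a : ℂ) * Complex.I) = Complex.exp ((b : ℂ) * Complex.I) := by rw [h]

/-- quasi-periodicity, restated with a real phase. -/
def Quasi (n N : ℕ) (u : (Fin n → ℝ) × (Fin n → ℝ) → ℂ) : Prop :=
  ∀ (q p : Fin n → ℝ) (a b : Fin n → ℤ),
    u (q + (fun i => (a i : ℝ)), p + (fun i => (b i : ℝ))) =
      Complex.exp (((-(Real.pi * N * ∑ i, ((a i : ℝ) * b i + b i * q i - p i * a i)) : ℝ) : ℂ)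
        * Complex.I) * u (q, p)

lemma Quasi.p {n N : ℕ} {u : (Fin n → ℝ) × (Fin n → ℝ) → ℂ} (h : Quasi n N u)
    (q p : Fin n → ℝ) (b : Fin n → ℤ) :
    u (q, p + (fun i => (b i : ℝ))) =
      Complex.exp (((-(Real.pi * N * ∑ i, (b i * q i)) : ℝ) : ℂ) * Complex.I) * u (q, p) := by
  have := h q p 0 b
  have e : (fun i => (((0 : Fin n → ℤ) i : ℤ) : ℝ)) = (0 : Fin n → ℝ) := by ext; simp
  rw [e, add_zero] at this
  rw [this]
  congr 1
  apply exp_arg_eq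
  simp

lemma Quasi.q {n N : ℕ} {u : (Fin n → ℝ) × (Fin n → ℝ) → ℂ} (h : Quasi n N u)
    (q p : Fin n → ℝ) (a : Fin n → ℤ) :
    u (q - (fun i => (a i : ℝ)), p) =
      Complex.exp (((-(Real.pi * N * ∑ i, (p i * a i)) : ℝ) : ℂ) * Complex.I) * u (q, p) := by
  have := h q p (-a) 0
  have e : (fun i => (((0 : Fin n → ℤ) i : ℤ) : ℝ)) = (0 : Fin n → ℝ) := by ext; simp
  have e' : (fun i => (((-a : Fin n → ℤ) i : ℤ) : ℝ)) = -(fun i => (a i : ℝ)) := by ext; simp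
  rw [e, e', add_zero, ← sub_eq_add_neg] at this
  rw [this]
  congr 1
  apply exp_arg_eq
  simp

lemma exp_int (m : ℤ) : Complex.exp (((-(2 * Real.pi * m) : ℝ) : ℂ) * Complex.I) = 1 := by
  rw [Complex.exp_eq_one_iff]
  exact ⟨-m, by push_cast; ring⟩

lemma qp_gj {n N : ℕ} (hN : 1 ≤ N) {u : (Fin n → ℝ) × (Fin n → ℝ) → ℂ} (hu : ContDiff ℝ ∞ u)
    (h : Quasi n N u) (j : Fin n → ℕ) : QP n N (gj N u j) where
  smooth := by
    unfold gj
    refine ContDiff.mul (ContDiff.cexp (ContDiff.mul ?_ contDiff_const)) ?_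
    · refine Complex.ofRealCLM.contDiff.comp (contDiff_const.mul ?_).neg
      refine ContDiff.sum fun i _ => ?_
      refine ContDiff.mul (by fun_prop) (contDiff_const.add (contDiff_const.mul ?_))
      fun_prop
    · exact hu.comp (by fun_prop)
  per y p b := by
    have hN' : (N : ℝ) ≠ 0 := by positivity
    simp only [gj]
    rw [h.p, ← mul_assoc, ← Complex.exp_add, ← add_mul, ← Complex.ofReal_add]
    congr 1
    have e : ∀ A B : ℝ, A = B + -(2 * Real.pi * ((∑ i, b i * (j i : ℤ) : ℤ) : ℝ)) →
        Complex.exp ((A : ℂ) * Complex.I) = Complex.exp ((B : ℂ) * Complex.I) := by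
      intro A B hAB
      rw [hAB, Complex.ofReal_add, add_mul, Complex.exp_add, exp_int, mul_one]
    apply e
    push_cast
    simp only [Finset.mul_sum, ← Finset.sum_neg_distrib, ← Finset.sum_add_distrib]
    refine Finset.sum_congr rfl fun i _ => ?_
    simp only [Pi.add_apply, Pi.sub_apply]
    field_simp
    ring
  qper y p a := by
    simp only [gj, smul_eq_mul, ph]
    rw [← sub_sub, h.q, ← mul_assoc, ← mul_assoc, ← Complex.exp_add, ← Complex.exp_add, ← add_mul,
      ← add_mul, ← Complex.ofReal_add, ← Complex.ofReal_add]
    congr 1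
    apply exp_arg_eq
    simp only [Finset.mul_sum, ← Finset.sum_neg_distrib, ← Finset.sum_add_distrib]
    refine Finset.sum_congr rfl fun i _ => ?_
    simp only [Pi.add_apply]
    ring

noncomputable def hq {n : ℕ} (N : ℕ) (u : (Fin n → ℝ) × (Fin n → ℝ) → ℂ) (q p : Fin n → ℝ) : ℂ :=
  Complex.exp (((Real.pi * N * ∑ i, q i * p i : ℝ) : ℂ) * Complex.I) * u (q, p)

lemma hq_per {n N : ℕ} {u : (Fin n → ℝ) × (Fin n → ℝ) → ℂ}
    (h : Quasi n N u) (q p : Fin n → ℝ) (b : Fin n → ℤ) :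
    hq N u q (p + fun i => (b i : ℝ)) = hq N u q p := by
  unfold hq
  rw [h.p, ← mul_assoc, ← Complex.exp_add, ← add_mul, ← Complex.ofReal_add]
  congr 1
  apply exp_arg_eq
  simp only [Finset.mul_sum, ← Finset.sum_neg_distrib, ← Finset.sum_add_distrib]
  refine Finset.sum_congr rfl fun i _ => ?_
  simp only [Pi.add_apply]
  ring

lemma mF {n : ℕ} (m : Fin n → ℤ) (p : Fin n → ℝ) :
    UnitAddTorus.mFourier m (fun i => (p i : UnitAddCircle)) =
      Complex.exp (((2 * Real.pi * ∑ i, (m i : ℝ) * p i : ℝ) : ℂ) * Complex.I) := by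
  simp only [UnitAddTorus.mFourier, ContinuousMap.coe_mk, fourier_coe_apply]
  rw [← Complex.exp_sum]
  congr 1
  push_cast
  simp only [Finset.mul_sum, Finset.sum_mul]
  refine Finset.sum_congr rfl fun i _ => ?_
  simp
  ring

lemma coeff_eq {n N : ℕ} (hN : 1 ≤ N) {u : (Fin n → ℝ) × (Fin n → ℝ) → ℂ}
    (h : Quasi n N u) (j : Fin n → ℕ) (k : Fin n → ℤ) (q : Fin n → ℝ) :
    UnitAddTorus.mFourierCoeff (lift (hq N u q)) (fun i => k i * N + j i) =
      S (gj N u j) ((fun i => (k i : ℝ) + (j i : ℝ) / N) - q) := by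
  have hN' : (N : ℝ) ≠ 0 := by positivity
  rw [UnitAddTorus.mFourierCoeff_eq_integral _ _ 0]
  unfold S
  congr 1
  ext p
  rw [lift_coe (hq_per h q), mF]
  simp only [gj, hq, smul_eq_mul]
  have e : (fun i => (j i : ℝ) / N) - ((fun i => (k i : ℝ) + (j i : ℝ) / N) - q) =
      q - fun i => (k i : ℝ) := by
    ext i; simp; ring
  rw [e, h.q, ← mul_assoc, ← mul_assoc, ← Complex.exp_add, ← Complex.exp_add, ← add_mul,
      ← add_mul, ← Complex.ofReal_add, ← Complex.ofReal_add]
  congr 1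
  apply exp_arg_eq
  simp only [Finset.mul_sum, ← Finset.sum_neg_distrib, ← Finset.sum_add_distrib]
  refine Finset.sum_congr rfl fun i _ => ?_
  simp only [Pi.sub_apply, Pi.neg_apply]
  push_cast
  field_simp
  ring

lemma rho_eq {n N : ℕ} (hN : 1 ≤ N) (f : (Fin n → ℝ) → ℂ) (q p : Fin n → ℝ) (j : Fin n → ℕ)
    (k : Fin n → ℤ) :
    rho n N (q, p) 1 f (fun i => (k i : ℝ) + (j i : ℝ) / N) =
      Complex.exp (((-(Real.pi * N * ∑ i, q i * p i) : ℝ) : ℂ) * Complex.I) *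
      (f ((fun i => (k i : ℝ) + (j i : ℝ) / N) - q) *
        UnitAddTorus.mFourier (fun i => k i * N + j i) (fun i => (p i : UnitAddCircle))) := by
  have hN' : (N : ℝ) ≠ 0 := by positivity
  rw [mF, mul_comm (f _), ← mul_assoc, ← Complex.exp_add, ← add_mul, ← Complex.ofReal_add]
  simp only [rho, one_pow, one_mul, QR]
  congr 1
  have : (2 * Real.pi * Complex.I * (N : ℂ) *
      (((∑ i : Fin n, p i * ((k i : ℝ) + (j i : ℝ) / N) : ℝ) : ℂ) -
        ((∑ i, q i * p i : ℝ) : ℂ) / 2)) =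
      ((2 * Real.pi * N * (∑ i : Fin n, p i * ((k i : ℝ) + (j i : ℝ) / N) - (∑ i, q i * p i) / 2) : ℝ) : ℂ) * Complex.I := by
    push_cast
    ring
  rw [this]
  apply exp_arg_eq
  simp only [Finset.mul_sum, Finset.sum_div, ← Finset.sum_sub_distrib, ← Finset.sum_neg_distrib,
    ← Finset.sum_add_distrib]
  refine Finset.sum_congr rfl fun i _ => ?_
  push_cast
  field_simp
  ring

/-- splitting of the lattice into residue classes mod `N` -/
def latEquiv (n N : ℕ) [NeZero N] : (Fin n → Fin N) × (Fin n → ℤ) ≃ (Fin n → ℤ) :=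
  (Equiv.prodComm _ _).trans ((Equiv.arrowProdEquivProdArrow (Fin n) (fun _ => ℤ) (fun _ => Fin N)).symm.trans
    (Equiv.piCongrRight fun _ => (Int.divModEquiv N).symm))

lemma latEquiv_apply (n N : ℕ) [NeZero N] (j : Fin n → Fin N) (k : Fin n → ℤ) :
    latEquiv n N (j, k) = fun i => k i * N + ((j i : ℕ) : ℤ) := by
  ext i
  simp [latEquiv, Equiv.arrowProdEquivProdArrow, Int.divModEquiv]

end Intw

/-- surjectivity of the intertwining map `U_{N,0}`: every smooth
`u : ℝ^{2n} → ℂ` satisfying the quasi-periodicity condition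
`u(x+w) = e^{−πiN(Q(w)+σ(w,x))} u(x)` for all `w ∈ ℤ^{2n}` can be written as
`u(x) = Σ_{j∈{0,…,N−1}ⁿ} Σ_{k∈ℤⁿ} (ρ_N(x) f_j)(k + j/N)` for some Schwartz functions `f_j`,
with absolute convergence of the inner series. -/
theorem intertwiner_surjective (n N : ℕ) (hN : 1 ≤ N)
    (u : (Fin n → ℝ) × (Fin n → ℝ) → ℂ) (hu : ContDiff ℝ (⊤ : ℕ∞) u)
    (hper : ∀ (x : (Fin n → ℝ) × (Fin n → ℝ)) (w : (Fin n → ℤ) × (Fin n → ℤ)),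
      u (x + castVec n w)
        = Complex.exp (-(Real.pi * Complex.I * (N : ℂ)) *
            (((QR n (castVec n w) : ℝ) : ℂ) + ((sigmaR n (castVec n w) x : ℝ) : ℂ))) * u x) :
    ∃ f : (Fin n → Fin N) → SchwartzMap ((Fin n) → ℝ) ℂ,
      (∀ (j : Fin n → Fin N) (x : (Fin n → ℝ) × (Fin n → ℝ)),
        Summable (fun k : Fin n → ℤ =>
          ‖rho n N x 1 (⇑(f j)) (fun i => (k i : ℝ) + ((j i : ℕ) : ℝ) / N)‖)) ∧
      ∀ x : (Fin n → ℝ) × (Fin n → ℝ),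
        u x = ∑ j : Fin n → Fin N,
          ∑' k : Fin n → ℤ,
            rho n N x 1 (⇑(f j)) (fun i => (k i : ℝ) + ((j i : ℕ) : ℝ) / N) := by
  have hz : NeZero N := ⟨by omega⟩
  have hq : Intw.Quasi n N u := by
    intro q p a b
    have := hper (q, p) (a, b)
    simp only [castVec, Prod.mk_add_mk, QR, sigmaR] at this
    rw [this]
    congr 2
    simp only [Finset.sum_add_distrib, Finset.sum_sub_distrib]
    push_cast
    ring
  have hQ := fun j : Fin n → Fin N => Intw.qp_gj hN hu hq (fun i => (j i : ℕ))
  have hsum : ∀ (j : Fin n → Fin N) (q : Fin n → ℝ), Summable (fun k : Fin n → ℤ =>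
      ‖Intw.S (Intw.gj N u (fun i => (j i : ℕ)))
        ((fun i => (k i : ℝ) + ((j i : ℕ) : ℝ) / N) - q)‖) := by
    intro j q
    refine (Intw.summable_lat ((hQ j).schwartz hN) (q - fun i => ((j i : ℕ) : ℝ) / N)).congr ?_
    intro k
    have e : (fun i => (k i : ℝ)) - (q - fun i => ((j i : ℕ) : ℝ) / N) =
        (fun i => (k i : ℝ) + ((j i : ℕ) : ℝ) / N) - q := by
      ext i; simp; ring
    rw [e]
    rfl
  refine ⟨fun j => (hQ j).schwartz hN, ?_, ?_⟩
  · rintro j ⟨q, p⟩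
    refine (hsum j q).congr fun k => ?_
    rw [Intw.rho_eq hN _ q p (fun i => (j i : ℕ)) k, Intw.mF, norm_mul, norm_mul,
      Complex.norm_exp_ofReal_mul_I, Complex.norm_exp_ofReal_mul_I, one_mul, mul_one]
    rfl
  · rintro ⟨q, p⟩
    have hcont : Continuous (Intw.hq N u q) := by
      have := hu.continuous
      unfold Intw.hq
      fun_prop
    let F : C(UnitAddTorus (Fin n), ℂ) :=
      ⟨Intw.lift (Intw.hq N u q), Intw.continuous_lift (Intw.hq_per hq q) hcont⟩
    have hco : ∀ z : (Fin n → Fin N) × (Fin n → ℤ),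
        UnitAddTorus.mFourierCoeff F (Intw.latEquiv n N z) =
        Intw.S (Intw.gj N u (fun i => (z.1 i : ℕ)))
          ((fun i => (z.2 i : ℝ) + ((z.1 i : ℕ) : ℝ) / N) - q) := by
      rintro ⟨j, k⟩
      rw [Intw.latEquiv_apply]
      exact Intw.coeff_eq hN hq (fun i => (j i : ℕ)) k q
    have hS : Summable (UnitAddTorus.mFourierCoeff F) := by
      rw [← (Intw.latEquiv n N).summable_iff]
      refine Summable.of_norm ?_
      rw [summable_prod_of_nonneg (fun _ => norm_nonneg _)]
      refine ⟨fun j => (hsum j q).congr fun k => ?_, Summable.of_finite⟩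
      exact congrArg norm (hco (j, k)).symm
    have h1 := UnitAddTorus.hasSum_mFourier_series_apply_of_summable hS
      (fun i => (p i : UnitAddCircle))
    have h2 := (Intw.latEquiv n N).hasSum_iff.2 h1
    have h3 := h2.mul_left
      (Complex.exp (((-(Real.pi * N * ∑ i, q i * p i) : ℝ) : ℂ) * Complex.I))
    have h4 : Complex.exp (((-(Real.pi * N * ∑ i, q i * p i) : ℝ) : ℂ) * Complex.I) *
        F (fun i => (p i : UnitAddCircle)) = u (q, p) := by
      change _ * Intw.lift (Intw.hq N u q) _ = _
      rw [Intw.lift_coe (Intw.hq_per hq q), Intw.hq, ← mul_assoc, ← Complex.exp_add, ← add_mul,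
        ← Complex.ofReal_add, neg_add_cancel]
      simp
    rw [h4] at h3
    rw [← h3.tsum_eq, h3.summable.tsum_prod, tsum_fintype]
    refine Finset.sum_congr rfl fun j _ => tsum_congr fun k => ?_
    rw [Intw.rho_eq hN _ q p (fun i => (j i : ℕ)) k, Function.comp, hco (j, k),
      Intw.latEquiv_apply, smul_eq_mul]
    rfl
end
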